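/- arXiv:2412.12787 — 4 statements merged into one kernel-verified Lean document; each statement's English description precedes it below -/
import Mathlib

section
/- Let b ≥ 3, r ≥ 1, and m be integers with 3−b ≤ m ≤ 1, and set n = br + m; assume n ≥ b+1. Then σ_{2,max}(b,n) = 1/r. -/
open scoped BigOperators
open Classical

/-- The Dirichlet energy of a function on a finite graph: `∑_{edges xy} (f x - f y)^2`. -/
noncomputable def dirichletEnergy {V : Type*} [Fintype V] (G : SimpleGraph V) (f : V → ℝ) : ℝ :=
  (∑ x : V, ∑ y : V, if G.Adj x y then (f x - f y) ^ 2 else 0) / 2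

/-- The `k`-th Steklov (Dirichlet-to-Neumann) eigenvalue (1-indexed, in increasing order
with multiplicity) of a finite graph `G` with boundary `B`, via the variational
(Courant–Fischer) characterization. -/
noncomputable def steklovEig {V : Type*} [Fintype V] (G : SimpleGraph V) (B : Finset V)
    (k : ℕ) : ℝ :=
  sInf { t : ℝ | ∃ F : Submodule ℝ (V → ℝ),
    Module.finrank ℝ (F.map (LinearMap.funLeft ℝ ℝ (fun x : {v // v ∈ B} => (x : V)))) = k ∧
    ∀ f ∈ F, dirichletEnergy G f ≤ t * ∑ x ∈ B, (f x) ^ 2 }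

/-- The set of leaves (vertices of degree 1) of a finite graph, as a `Finset`. -/
noncomputable def leavesFinset {V : Type*} [Fintype V] (G : SimpleGraph V) : Finset V :=
  Finset.univ.filter fun v => G.degree v = 1

/-- `σ_{k,max}(b,n)`: the maximum of the `k`-th Steklov eigenvalue over all trees with
`b` leaves (as boundary) and `n` vertices. -/
noncomputable def sigmaMax (k b n : ℕ) : ℝ :=
  sSup { s : ℝ | ∃ G : SimpleGraph (Fin n), G.IsTree ∧ (leavesFinset G).card = b ∧
    s = steklovEig G (leavesFinset G) k }

/-- `σ̃_{2,max}(D,n)`: the maximum of the first nontrivial Steklov eigenvalue over all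
trees with diameter `D` and `n` vertices. -/
noncomputable def sigmaTildeMax (D n : ℕ) : ℝ :=
  sSup { s : ℝ | ∃ G : SimpleGraph (Fin n), G.IsTree ∧ G.diam = D ∧
    s = steklovEig G (leavesFinset G) 2 }

section TreeMetric

variable {V : Type*} {G : SimpleGraph V}

lemma tree_dist_adj (hG : G.IsTree) (c : V) {v w : V} (h : G.Adj v w) :
    G.dist c w = G.dist c v + 1 ∨ G.dist c v = G.dist c w + 1 := by
  have h1 := hG.dist_ne_of_adj c h
  have h2 := hG.connected.dist_triangle (u := c) (v := v) (w := w)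
  have h3 := hG.connected.dist_triangle (u := c) (v := w) (w := v)
  have h4 : G.dist v w = 1 := SimpleGraph.dist_eq_one_iff_adj.2 h
  have h5 : G.dist w v = 1 := SimpleGraph.dist_eq_one_iff_adj.2 h.symm
  omega

lemma tree_par_unique (hG : G.IsTree) (c : V) {v w w' : V} (h : G.Adj v w) (h' : G.Adj v w')
    (hd : G.dist c v = G.dist c w + 1) (hd' : G.dist c v = G.dist c w' + 1) : w = w' := by
  obtain ⟨p, hp⟩ := hG.connected.exists_walk_length_eq_dist w c
  obtain ⟨p', hp'⟩ := hG.connected.exists_walk_length_eq_dist w' c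
  have h1 : (SimpleGraph.Walk.cons h p).IsPath := by
    apply SimpleGraph.Walk.isPath_of_length_eq_dist
    rw [SimpleGraph.Walk.length_cons, hp, SimpleGraph.dist_comm, SimpleGraph.dist_comm (u := v)]
    omega
  have h2 : (SimpleGraph.Walk.cons h' p').IsPath := by
    apply SimpleGraph.Walk.isPath_of_length_eq_dist
    rw [SimpleGraph.Walk.length_cons, hp', SimpleGraph.dist_comm, SimpleGraph.dist_comm (u := v)]
    omega
  have := (hG.existsUnique_path v c).unique h1 h2
  have := congrArg SimpleGraph.Walk.snd this
  simpa using this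

lemma tree_par_exists (hG : G.IsTree) (c : V) {v : V} (h : v ≠ c) :
    ∃ w, G.Adj v w ∧ G.dist c v = G.dist c w + 1 := by
  obtain ⟨p, hp⟩ := hG.connected.exists_walk_length_eq_dist v c
  cases p with
  | nil => exact absurd rfl h
  | cons h1 q =>
    rename_i w
    refine ⟨w, h1, ?_⟩
    rw [SimpleGraph.Walk.length_cons, SimpleGraph.dist_comm] at hp
    have h2 := SimpleGraph.dist_le q
    rw [SimpleGraph.dist_comm] at h2
    rcases tree_dist_adj hG c h1 with h | h <;> omega

/-- additivity of the distance across an edge -/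
lemma tree_dist_across (hG : G.IsTree) {c c' y : V} (hcc : G.Adj c c')
    (hy : G.dist y c = G.dist y c' + 1) :
    ∀ k : ℕ, ∀ z : V, G.dist c z = k → G.dist c' z = k + 1 → G.dist y z = G.dist y c + k := by
  intro k
  induction k using Nat.strong_induction_on with
  | _ k ih =>
    intro z hz hz'
    by_cases hzc : z = c
    · subst hzc
      simp at hz
      omega
    obtain ⟨p, hzp, hp⟩ := tree_par_exists hG c hzc
    have hp' : G.dist c' p = G.dist c p + 1 := by
      have a1 := tree_dist_adj hG c' hzp
      have a2 := tree_dist_adj hG p hcc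
      rw [SimpleGraph.dist_comm, SimpleGraph.dist_comm (v := c)] at a2
      omega
    have ihp := ih (G.dist c p) (by omega) p rfl hp'
    rcases tree_dist_adj hG y hzp with h | h
    · exfalso
      by_cases hpc : p = c
      · subst hpc
        have := tree_par_unique hG y hzp.symm hcc h hy
        subst this
        simp at hz'
      · obtain ⟨q, hpq, hq⟩ := tree_par_exists hG c hpc
        have hq' : G.dist c' q = G.dist c q + 1 := by
          have a1 := tree_dist_adj hG c' hpq
          have a2 := tree_dist_adj hG q hcc
          rw [SimpleGraph.dist_comm, SimpleGraph.dist_comm (v := c)] at a2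
          omega
        have ihq := ih (G.dist c q) (by omega) q rfl hq'
        have := tree_par_unique hG y hzp.symm hpq h (by omega)
        subst this
        omega
    · omega

lemma exists_geodesic (hG : G.IsTree) (y : V) : ∀ D : ℕ, ∀ x : V, G.dist y x = D →
    ∃ P : ℕ → V, P 0 = x ∧ P D = y ∧ (∀ i < D, G.Adj (P i) (P (i + 1))) ∧
      (∀ i ≤ D, G.dist y (P i) = D - i) := by
  intro D
  induction D with
  | zero =>
    intro x hx
    have : y = x := (hG.connected.dist_eq_zero_iff).1 hx
    subst this
    exact ⟨fun _ => y, rfl, rfl, by simp, by simp⟩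
  | succ D ih =>
    intro x hx
    have hxy : x ≠ y := by
      rintro rfl
      simp at hx
    obtain ⟨w, hw, hd⟩ := tree_par_exists hG y hxy
    obtain ⟨P, h0, h1, h2, h3⟩ := ih w (by omega)
    refine ⟨fun i => if i = 0 then x else P (i - 1), by simp, by simpa using h1, ?_, ?_⟩
    · intro i hi
      rcases i with _ | i
      · simpa [h0] using hw
      · simpa using h2 i (by omega)
    · intro i hi
      rcases i with _ | i
      · simpa using hx
      · simpa using h3 i (by omega)

end TreeMetric
section Far

variable {V : Type*} [Fintype V] {G : SimpleGraph V}

lemma mem_leaves {v : V} : v ∈ leavesFinset G ↔ ∃! w, G.Adj v w := by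
  unfold leavesFinset
  rw [Finset.mem_filter, SimpleGraph.degree_eq_one_iff_existsUnique_adj]
  simp

lemma far_leaf (hG : G.IsTree) {x y : V} (hxy : x ≠ y)
    (hmax : ∀ z, G.dist y z ≤ G.dist y x) : x ∈ leavesFinset G := by
  rw [mem_leaves]
  obtain ⟨w, hw, hd⟩ := tree_par_exists hG y hxy
  refine ⟨w, hw, ?_⟩
  intro w' hw'
  have h1 := hmax w'
  rcases tree_dist_adj hG y hw' with h | h
  · omega
  · exact tree_par_unique hG y hw' hw h hd

/-- Counting through a depth function with unique parents. -/
lemma count_depth (dep : V → ℕ) (r b : ℕ) (c c' : V)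
    (hb : (leavesFinset G).card = b)
    (hdep : ∀ v, dep v ≤ r - 1)
    (h0 : ∀ v, dep v = 0 → v = c ∨ v = c')
    (hex : ∀ v, dep v ≠ 0 → ∃ w, G.Adj v w ∧ dep v = dep w + 1)
    (hun : ∀ v w w', G.Adj v w → G.Adj v w' → dep v = dep w + 1 → dep v = dep w' + 1 → w = w')
    (hadj : ∀ v w, G.Adj v w → dep v ≠ 0 → dep w = dep v + 1 ∨ dep v = dep w + 1) :
    Fintype.card V ≤ b * (r - 1) + 2 := by
  classical
  choose! par hpar1 hpar2 using hex
  have key : ∀ k : ℕ, ∀ v, dep v ≠ 0 → r - 1 - dep v = k →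
      ∃ l ∈ leavesFinset G, ∃ i : ℕ, par^[i] l = v ∧ dep l = dep v + i := by
    intro k
    induction k with
    | zero =>
      intro v hv hk
      refine ⟨v, ?_, 0, rfl, rfl⟩
      rw [mem_leaves]
      refine ⟨par v, hpar1 v hv, ?_⟩
      intro w hw
      rcases hadj v w hw hv with h | h
      · have := hdep w; omega
      · exact hun v w (par v) hw (hpar1 v hv) h (hpar2 v hv)
    | succ k ih =>
      intro v hv hk
      by_cases hl : v ∈ leavesFinset G
      · exact ⟨v, hl, 0, rfl, rfl⟩
      · have : ∃ w, G.Adj v w ∧ w ≠ par v := by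
          by_contra hcon
          push Not at hcon
          exact hl (mem_leaves.2 ⟨par v, hpar1 v hv, hcon⟩)
        obtain ⟨w, hw, hne⟩ := this
        have hdw : dep w = dep v + 1 := by
          rcases hadj v w hw hv with h | h
          · exact h
          · exact absurd (hun v w (par v) hw (hpar1 v hv) h (hpar2 v hv)) hne
        have hw0 : dep w ≠ 0 := by omega
        have hpw : par w = v := hun w _ _ (hpar1 w hw0) hw.symm (hpar2 w hw0) hdw
        obtain ⟨l, hl, i, hi, hd⟩ := ih w hw0 (by omega)
        refine ⟨l, hl, i + 1, ?_, by omega⟩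
        rw [Function.iterate_succ_apply', hi, hpw]
  have key' : ∀ v, dep v ≠ 0 → ∃ l, l ∈ leavesFinset G ∧ par^[dep l - dep v] l = v := by
    intro v hv
    obtain ⟨l, hl, i, hi, hd⟩ := key _ v hv rfl
    refine ⟨l, hl, ?_⟩
    rw [hd, Nat.add_sub_cancel_left, hi]
  choose! lf hlf1 hlf2 using key'
  set S : Finset V := Finset.univ.filter (fun v => dep v ≠ 0) with hS
  have hc1 : S.card ≤ ((leavesFinset G) ×ˢ Finset.Icc 1 (r - 1)).card := by
    apply Finset.card_le_card_of_injOn (fun v => (lf v, dep v))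
    · intro v hv
      have hv' : dep v ≠ 0 := by simpa [hS] using hv
      have := hdep v
      simp only [Finset.coe_product, Set.mem_prod, Finset.mem_coe, Finset.mem_Icc]
      exact ⟨hlf1 v hv', by omega, this⟩
    · intro v hv w hw hvw
      have hv' : dep v ≠ 0 := by simpa [hS] using hv
      have hw' : dep w ≠ 0 := by simpa [hS] using hw
      simp only [Prod.mk.injEq] at hvw
      rw [← hlf2 v hv', ← hlf2 w hw', hvw.1, hvw.2]
  have hc2 : (Finset.univ : Finset V) ⊆ S ∪ {c, c'} := by
    intro v _
    by_cases hv : dep v = 0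
    · rcases h0 v hv with h | h <;> simp [h]
    · simp [hS, hv]
  have hc3 := Finset.card_le_card hc2
  have hc4 := Finset.card_union_le S {c, c'}
  have hc5 : ({c, c'} : Finset V).card ≤ 2 := Finset.card_le_two
  rw [Finset.card_product, hb, Nat.card_Icc, Nat.add_sub_cancel] at hc1
  rw [Finset.card_univ] at hc3
  omega

/-- Depth facts on one side of an edge. -/
lemma side_par (hG : G.IsTree) {c c' v w : V} (hcc : G.Adj c c') (hv : G.dist c v < G.dist c' v)
    (hvw : G.Adj v w) (hd : G.dist c v = G.dist c w + 1) : G.dist c w < G.dist c' w := by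
  have a1 := tree_dist_adj hG c' hvw
  have a2 := tree_dist_adj hG w hcc
  have a3 := tree_dist_adj hG v hcc
  rw [SimpleGraph.dist_comm, SimpleGraph.dist_comm (v := c)] at a2 a3
  omega

lemma side_child (hG : G.IsTree) {c c' v w : V} (hcc : G.Adj c c') (hv : G.dist c v < G.dist c' v)
    (hvc : v ≠ c)
    (hvw : G.Adj v w) (hd : G.dist c w = G.dist c v + 1) : G.dist c w < G.dist c' w := by
  obtain ⟨p, hp, hdp⟩ := tree_par_exists hG c hvc
  have hps := side_par hG hcc hv hp hdp
  have a1 := tree_dist_adj hG c' hvw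
  have a2 := tree_dist_adj hG w hcc
  have a3 := tree_dist_adj hG v hcc
  have a4 := tree_dist_adj hG p hcc
  rw [SimpleGraph.dist_comm, SimpleGraph.dist_comm (v := c)] at a2 a3 a4
  by_contra hcon
  have : w = p := tree_par_unique hG c' hvw hp (by omega) (by omega)
  subst this
  omega

lemma side_ne (hG : G.IsTree) {c c' : V} (hcc : G.Adj c c') (v : V) :
    G.dist c' v = G.dist c v + 1 ∨ G.dist c v = G.dist c' v + 1 := by
  have a2 := tree_dist_adj hG v hcc
  rw [SimpleGraph.dist_comm, SimpleGraph.dist_comm (v := c)] at a2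
  exact a2

lemma count_edge (hG : G.IsTree) (r b : ℕ) {c c' : V} (hcc : G.Adj c c')
    (hb : (leavesFinset G).card = b)
    (hdep : ∀ v, min (G.dist c v) (G.dist c' v) ≤ r - 1) :
    Fintype.card V ≤ b * (r - 1) + 2 := by
  refine count_depth (fun v => min (G.dist c v) (G.dist c' v)) r b c c' hb hdep ?_ ?_ ?_ ?_
  · intro v hv
    rcases side_ne hG hcc v with h | h
    · left
      have : G.dist c v = 0 := by omega
      exact ((hG.connected.dist_eq_zero_iff).1 this).symm
    · right
      have : G.dist c' v = 0 := by omega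
      exact ((hG.connected.dist_eq_zero_iff).1 this).symm
  · intro v hv
    rcases side_ne hG hcc v with h | h
    · have : v ≠ c := by
        rintro rfl
        simp at hv
      obtain ⟨w, hw, hd⟩ := tree_par_exists hG c this
      have := side_par hG hcc (by omega) hw hd
      refine ⟨w, hw, ?_⟩
      omega
    · have : v ≠ c' := by
        rintro rfl
        simp at hv
      obtain ⟨w, hw, hd⟩ := tree_par_exists hG c' this
      have := side_par hG hcc.symm (by omega) hw hd
      refine ⟨w, hw, ?_⟩
      omega
  · intro v w w' hw hw' hd hd'
    have b1 := tree_dist_adj hG c hw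
    have b2 := tree_dist_adj hG c hw'
    have b3 := tree_dist_adj hG c' hw
    have b4 := tree_dist_adj hG c' hw'
    have b5 := side_ne hG hcc v
    have b6 := side_ne hG hcc w
    have b7 := side_ne hG hcc w'
    rcases b5 with h | h
    · exact tree_par_unique hG c hw hw' (by omega) (by omega)
    · exact tree_par_unique hG c' hw hw' (by omega) (by omega)
  · intro v w hw hv
    have b1 := tree_dist_adj hG c hw
    have b3 := tree_dist_adj hG c' hw
    have b5 := side_ne hG hcc v
    have b6 := side_ne hG hcc w
    rcases b5 with h | h
    · have hvc : v ≠ c := by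
        rintro rfl
        simp at hv
      rcases b1 with h1 | h1
      · have := side_child hG hcc (by omega) hvc hw h1
        omega
      · omega
    · have hvc : v ≠ c' := by
        rintro rfl
        simp at hv
      rcases b3 with h1 | h1
      · have := side_child hG hcc.symm (by omega) hvc hw h1
        omega
      · omega

lemma exists_long_path (hG : G.IsTree) (r b : ℕ) (hr : 1 ≤ r) (h2 : 2 ≤ Fintype.card V)
    (hb : (leavesFinset G).card = b) (hn : b * r + 3 ≤ Fintype.card V + b) :
    ∃ (P : ℕ → V) (L : ℕ), 2 * r ≤ L ∧ P 0 ∈ leavesFinset G ∧ P L ∈ leavesFinset G ∧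
      (∀ i < L, G.Adj (P i) (P (i + 1))) ∧ (∀ i ≤ L, ∀ j ≤ L, P i = P j → i = j) := by
  have : Nonempty V := hG.connected.nonempty
  obtain ⟨⟨y, x⟩, hmax⟩ := Finite.exists_max (fun p : V × V => G.dist p.1 p.2)
  simp only [Prod.forall] at hmax
  have hxy : x ≠ y := by
    rintro rfl
    have : Nontrivial V := Fintype.one_lt_card_iff_nontrivial.1 h2
    obtain ⟨u, v, huv⟩ := exists_pair_ne V
    have := hmax u v
    rw [SimpleGraph.dist_self] at this
    exact huv ((hG.connected.dist_eq_zero_iff).1 (by omega))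
  have hxl := far_leaf hG hxy (fun z => hmax y z)
  have hyl := far_leaf hG hxy.symm (fun z => by
    have := hmax x z; rwa [SimpleGraph.dist_comm (u := y)] at this)
  obtain ⟨P, hP0, hPD, hPa, hPd⟩ := exists_geodesic hG y (G.dist y x) x rfl
  set D := G.dist y x with hD
  have hDpos : 0 < D := by
    rcases Nat.eq_zero_or_pos D with h | h
    · exact absurd ((hG.connected.dist_eq_zero_iff).1 h).symm hxy
    · exact h
  by_cases hDr : 2 * r ≤ D
  · refine ⟨P, D, hDr, hP0 ▸ hxl, hPD ▸ hyl, hPa, ?_⟩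
    intro i hi j hj hij
    have h1 := hPd i hi
    have h2 := hPd j hj
    rw [hij] at h1
    omega
  · exfalso
    have hxd : ∀ i ≤ D, G.dist x (P i) = i := by
      intro i
      induction i with
      | zero => intro _; simp [hP0]
      | succ i ih =>
        intro hi
        have h1 := ih (by omega)
        have h3 := tree_dist_adj hG x (hPa i (by omega))
        have h4 := hG.connected.dist_triangle (u := y) (v := P (i + 1)) (w := x)
        rw [SimpleGraph.dist_comm (u := P (i + 1)) (v := x), hPd _ hi] at h4
        omega
    set k := (D - 1) / 2 with hk
    have hcc := hPa k (by omega)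
    have e1 := hxd k (by omega)
    have e2 := hxd (k + 1) (by omega)
    have e3 := hPd k (by omega)
    have e4 := hPd (k + 1) (by omega)
    have hfin := count_edge hG r b hcc hb (by
      intro z
      rcases side_ne hG hcc z with h | h
      · have := tree_dist_across hG hcc (y := y) (by omega) _ z rfl h
        have := hmax y z
        omega
      · have := tree_dist_across hG hcc.symm (y := x) (by omega) _ z rfl h
        have := hmax x z
        omega)
    obtain ⟨s, rfl⟩ : ∃ s, r = s + 1 := ⟨r - 1, by omega⟩
    rw [Nat.add_sub_cancel] at hfin
    rw [Nat.mul_add] at hn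
    omega

end Far
section Upper

variable {V : Type*} [Fintype V] {G : SimpleGraph V}

lemma dirichletEnergy_nonneg (f : V → ℝ) : 0 ≤ dirichletEnergy G f := by
  unfold dirichletEnergy
  refine div_nonneg (Finset.sum_nonneg fun x _ => Finset.sum_nonneg fun y _ => ?_) (by norm_num)
  split_ifs
  · positivity
  · exact le_rfl

/-- the set in the definition of `steklovEig` -/
def stekSet (G : SimpleGraph V) (B : Finset V) (k : ℕ) : Set ℝ :=
  { t : ℝ | ∃ F : Submodule ℝ (V → ℝ),
    Module.finrank ℝ (F.map (LinearMap.funLeft ℝ ℝ (fun x : {v // v ∈ B} => (x : V)))) = k ∧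
    ∀ f ∈ F, dirichletEnergy G f ≤ t * ∑ x ∈ B, (f x) ^ 2 }

lemma exists_zero_sum (B : Finset V) (F : Submodule ℝ (V → ℝ))
    (hF : Module.finrank ℝ
      (F.map (LinearMap.funLeft ℝ ℝ (fun x : {v // v ∈ B} => (x : V)))) = 2) :
    ∃ f ∈ F, ∑ x ∈ B, f x = 0 ∧ 0 < ∑ x ∈ B, (f x) ^ 2 := by
  set W := F.map (LinearMap.funLeft ℝ ℝ (fun x : {v // v ∈ B} => (x : V))) with hW
  let φ : W →ₗ[ℝ] ℝ := (∑ i, LinearMap.proj i : ({v // v ∈ B} → ℝ) →ₗ[ℝ] ℝ).comp W.subtype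
  have hker : LinearMap.ker φ ≠ ⊥ := by
    apply LinearMap.ker_ne_bot_of_finrank_lt
    rw [hF]; simp
  obtain ⟨⟨w, hw⟩, hwk, hw0⟩ := (Submodule.ne_bot_iff _).1 hker
  obtain ⟨f, hf, rfl⟩ := hw
  have hs : ∑ x ∈ B, f x = 0 := by
    have : φ ⟨_, ⟨f, hf, rfl⟩⟩ = 0 := hwk
    rw [← Finset.sum_attach]
    simpa [φ, LinearMap.funLeft_apply] using this
  refine ⟨f, hf, hs, ?_⟩
  by_contra hcon
  have hz : ∑ x ∈ B, (f x) ^ 2 = 0 :=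
    le_antisymm (not_lt.1 hcon) (Finset.sum_nonneg fun x _ => sq_nonneg _)
  rw [Finset.sum_eq_zero_iff_of_nonneg (fun x _ => sq_nonneg _)] at hz
  apply hw0
  ext i
  have := hz i.1 i.2
  simpa [LinearMap.funLeft_apply] using this

lemma stekSet_nonneg (B : Finset V) {t : ℝ} (ht : t ∈ stekSet G B 2) : 0 ≤ t := by
  obtain ⟨F, hF, h⟩ := ht
  obtain ⟨f, hf, -, hpos⟩ := exists_zero_sum B F hF
  have h1 := h f hf
  have h2 := dirichletEnergy_nonneg (G := G) f
  by_contra hcon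
  push Not at hcon
  nlinarith

/-- energy of combinations of cut indicators along a path -/
lemma energy_path (P : ℕ → V) (L : ℕ)
    (hinj : ∀ i ≤ L, ∀ j ≤ L, P i = P j → i = j)
    (A : ℕ → V → ℝ)
    (hA : ∀ i < L, ∀ u v, G.Adj u v → s(u, v) ≠ s(P i, P (i + 1)) → A i u = A i v)
    (hA1 : ∀ i < L, A i (P i) = 1) (hA0 : ∀ i < L, A i (P (i + 1)) = 0)
    (c : ℕ → ℝ) (k : ℝ) (g : V → ℝ) (hg : ∀ z, g z = k + ∑ i ∈ Finset.range L, c i * A i z) :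
    dirichletEnergy G g ≤ ∑ i ∈ Finset.range L, (c i) ^ 2 := by
  have hpt : ∀ u v : V, (if G.Adj u v then (g u - g v) ^ 2 else 0) ≤
      ∑ i ∈ Finset.range L, ((if u = P i then if v = P (i + 1) then (c i) ^ 2 else 0 else 0) +
        (if v = P i then if u = P (i + 1) then (c i) ^ 2 else 0 else 0)) := by
    intro u v
    have hnn : ∀ i ∈ Finset.range L,
      0 ≤ ((if u = P i then if v = P (i + 1) then (c i) ^ 2 else 0 else 0) +
        (if v = P i then if u = P (i + 1) then (c i) ^ 2 else 0 else 0)) := by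
      intro i _
      split_ifs <;> positivity
    split_ifs with huv
    · have hd : g u - g v = ∑ i ∈ Finset.range L, c i * (A i u - A i v) := by
        rw [hg, hg]
        simp only [mul_sub, Finset.sum_sub_distrib]
        ring
      by_cases hex : ∃ i < L, s(u, v) = s(P i, P (i + 1))
      · obtain ⟨i, hi, he⟩ := hex
        have hsum : ∑ j ∈ Finset.range L, c j * (A j u - A j v) = c i * (A i u - A i v) := by
          apply Finset.sum_eq_single_of_mem i (Finset.mem_range.2 hi)
          intro j hj hji
          have hj' := Finset.mem_range.1 hj
          have : s(u, v) ≠ s(P j, P (j + 1)) := by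
            rw [he]
            intro h
            rw [Sym2.eq_iff] at h
            rcases h with ⟨h, -⟩ | ⟨h, h'⟩
            · exact hji (hinj _ (by omega) _ (by omega) h).symm
            · have e1 := hinj _ (by omega) _ (by omega) h
              have e2 := hinj _ (by omega) _ (by omega) h'
              omega
          rw [hA j hj' u v huv this]
          ring
        refine le_trans ?_ (Finset.single_le_sum hnn (Finset.mem_range.2 hi))
        rw [hd, hsum]
        rw [Sym2.eq_iff] at he
        have p1 := hA1 i hi
        have p0 := hA0 i hi
        rcases he with ⟨h1, h2⟩ | ⟨h1, h2⟩
        · rw [if_pos h1, if_pos h2, h1, h2, p1, p0]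
          have : (0:ℝ) ≤ (if P (i + 1) = P i then if P i = P (i + 1) then (c i) ^ 2 else 0 else 0) := by
            split_ifs <;> positivity
          linarith
        · rw [if_pos h2, if_pos h1, h1, h2, p1, p0]
          have : (0:ℝ) ≤ (if P (i + 1) = P i then if P i = P (i + 1) then (c i) ^ 2 else 0 else 0) := by
            split_ifs <;> positivity
          linarith
      · push Not at hex
        have : g u - g v = 0 := by
          rw [hd]
          apply Finset.sum_eq_zero
          intro j hj
          rw [hA j (Finset.mem_range.1 hj) u v huv (hex j (Finset.mem_range.1 hj))]
          ring
        rw [this]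
        simpa using Finset.sum_nonneg hnn
    · exact Finset.sum_nonneg hnn
  have htot : ∑ u : V, ∑ v : V, (if G.Adj u v then (g u - g v) ^ 2 else 0) ≤
      ∑ u : V, ∑ v : V, ∑ i ∈ Finset.range L,
        ((if u = P i then if v = P (i + 1) then (c i) ^ 2 else 0 else 0) +
        (if v = P i then if u = P (i + 1) then (c i) ^ 2 else 0 else 0)) :=
    Finset.sum_le_sum fun u _ => Finset.sum_le_sum fun v _ => hpt u v
  have hval : ∑ u : V, ∑ v : V, ∑ i ∈ Finset.range L,
        ((if u = P i then if v = P (i + 1) then (c i) ^ 2 else 0 else 0) +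
        (if v = P i then if u = P (i + 1) then (c i) ^ 2 else 0 else 0)) =
      2 * ∑ i ∈ Finset.range L, (c i) ^ 2 := by
    have : ∀ u : V, ∑ v : V, ∑ i ∈ Finset.range L,
        ((if u = P i then if v = P (i + 1) then (c i) ^ 2 else 0 else 0) +
        (if v = P i then if u = P (i + 1) then (c i) ^ 2 else 0 else 0)) =
        ∑ i ∈ Finset.range L, ∑ v : V,
        ((if u = P i then if v = P (i + 1) then (c i) ^ 2 else 0 else 0) +
        (if v = P i then if u = P (i + 1) then (c i) ^ 2 else 0 else 0)) :=
      fun u => Finset.sum_comm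
    simp only [this]
    rw [Finset.sum_comm, Finset.mul_sum]
    apply Finset.sum_congr rfl
    intro i _
    simp only [Finset.sum_add_distrib]
    have e1 : ∑ u : V, ∑ v : V, (if u = P i then if v = P (i + 1) then (c i) ^ 2 else 0 else 0) =
        (c i) ^ 2 := by
      rw [Finset.sum_eq_single (P i)]
      · simp
      · intro u _ hu; simp [hu]
      · simp
    have e2 : ∑ u : V, ∑ v : V, (if v = P i then if u = P (i + 1) then (c i) ^ 2 else 0 else 0) =
        (c i) ^ 2 := by
      rw [Finset.sum_eq_single (P (i + 1))]
      · simp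
      · intro u _ hu; simp [hu]
      · simp
    rw [e1, e2]
    ring
  unfold dirichletEnergy
  linarith

lemma path_cut (hG : G.IsTree) (P : ℕ → V) (L : ℕ)
    (hadj : ∀ i < L, G.Adj (P i) (P (i + 1)))
    (hinj : ∀ i ≤ L, ∀ j ≤ L, P i = P j → i = j) :
    ∃ A : ℕ → V → ℝ,
    (∀ i < L, ∀ u v, G.Adj u v → s(u, v) ≠ s(P i, P (i + 1)) → A i u = A i v) ∧
    (∀ i < L, A i (P i) = 1) ∧ (∀ i < L, A i (P (i + 1)) = 0) ∧
    (∀ i < L, A i (P 0) = 1) ∧ (∀ i < L, A i (P L) = 0) := by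
  classical
  let A : ℕ → V → ℝ := fun i z =>
    if (G.deleteEdges {s(P i, P (i + 1))}).Reachable (P i) z then 1 else 0
  have h1 : ∀ i < L, ∀ u v, G.Adj u v → s(u, v) ≠ s(P i, P (i + 1)) → A i u = A i v := by
    intro i hi u v huv hne
    have ha : (G.deleteEdges {s(P i, P (i + 1))}).Adj u v := by
      rw [SimpleGraph.deleteEdges_adj]
      exact ⟨huv, by simpa using hne⟩
    have : (G.deleteEdges {s(P i, P (i + 1))}).Reachable (P i) u ↔
        (G.deleteEdges {s(P i, P (i + 1))}).Reachable (P i) v :=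
      ⟨fun h => h.trans ha.reachable, fun h => h.trans ha.symm.reachable⟩
    simp only [A, this]
  have h2 : ∀ i < L, A i (P i) = 1 := by
    intro i hi
    simp [A]
  have h3 : ∀ i < L, A i (P (i + 1)) = 0 := by
    intro i hi
    have := (SimpleGraph.isAcyclic_iff_forall_adj_isBridge.1 hG.isAcyclic) (hadj i hi)
    rw [SimpleGraph.isBridge_iff] at this
    simp only [A]
    rw [if_neg]
    simpa using this
  have hstep : ∀ i < L, ∀ j < L, j ≠ i → A i (P j) = A i (P (j + 1)) := by
    intro i hi j hj hji
    apply h1 i hi _ _ (hadj j hj)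
    intro h
    rw [Sym2.eq_iff] at h
    rcases h with ⟨h, -⟩ | ⟨h, h'⟩
    · exact hji (hinj _ (by omega) _ (by omega) h)
    · have e1 := hinj _ (by omega) _ (by omega) h
      have e2 := hinj _ (by omega) _ (by omega) h'
      omega
  refine ⟨A, h1, h2, h3, ?_, ?_⟩
  · intro i hi
    have : ∀ j ≤ i, A i (P j) = A i (P 0) := by
      intro j
      induction j with
      | zero => intro _; rfl
      | succ j ih =>
        intro hj
        rw [← ih (by omega), hstep i hi j (by omega) (by omega)]
    rw [← this i le_rfl, h2 i hi]
  · intro i hi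
    have : ∀ j, i + 1 + j ≤ L → A i (P (i + 1 + j)) = A i (P (i + 1)) := by
      intro j
      induction j with
      | zero => intro _; rfl
      | succ j ih =>
        intro hj
        rw [← ih (by omega), hstep i hi (i + 1 + j) (by omega) (by omega)]
        rfl
    have h4 := this (L - (i + 1)) (by omega)
    rw [h3 i hi, Nat.add_sub_cancel' (by omega)] at h4
    exact h4

lemma mem_stekSet_of_path (hG : G.IsTree) (B : Finset V) (P : ℕ → V) (L r : ℕ) (hr : 1 ≤ r)
    (hL : 2 * r ≤ L) (hx : P 0 ∈ B) (hy : P L ∈ B)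
    (hadj : ∀ i < L, G.Adj (P i) (P (i + 1)))
    (hinj : ∀ i ≤ L, ∀ j ≤ L, P i = P j → i = j) :
    (1 / (r : ℝ)) ∈ stekSet G B 2 := by
  classical
  obtain ⟨A, hA, hA1, hA0, hAx, hAy⟩ := path_cut hG P L hadj hinj
  have hr0 : (r : ℝ) ≠ 0 := by positivity
  let c1 : ℕ → ℝ := fun i => if i < r then 1 / (r : ℝ) else 0
  let c2 : ℕ → ℝ := fun i => if L - r ≤ i then 1 / (r : ℝ) else 0
  have hc1 : ∑ i ∈ Finset.range L, c1 i = 1 := by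
    simp only [c1]
    rw [← Finset.sum_filter]
    have : (Finset.range L).filter (fun i => i < r) = Finset.range r := by
      ext i; simp; omega
    rw [this]
    simp [hr0]
  have hc2 : ∑ i ∈ Finset.range L, c2 i = 1 := by
    simp only [c2]
    rw [← Finset.sum_filter]
    have : (Finset.range L).filter (fun i => L - r ≤ i) = Finset.Ico (L - r) L := by
      ext i; simp; omega
    rw [this, Finset.sum_const, Nat.card_Ico, Nat.sub_sub_self (by omega)]
    simp [hr0]
  let f1 : V → ℝ := fun z => ∑ i ∈ Finset.range L, c1 i * A i z
  let f2 : V → ℝ := fun z => ∑ i ∈ Finset.range L, c2 i * (1 - A i z)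
  have f1x : f1 (P 0) = 1 := by
    simp only [f1]
    refine Eq.trans ?_ hc1
    exact Finset.sum_congr rfl fun i hi => by rw [hAx i (Finset.mem_range.1 hi), mul_one]
  have f1y : f1 (P L) = 0 := by
    simp only [f1]
    exact Finset.sum_eq_zero fun i hi => by rw [hAy i (Finset.mem_range.1 hi), mul_zero]
  have f2x : f2 (P 0) = 0 := by
    simp only [f2]
    exact Finset.sum_eq_zero fun i hi => by rw [hAx i (Finset.mem_range.1 hi)]; ring
  have f2y : f2 (P L) = 1 := by
    simp only [f2]
    refine Eq.trans ?_ hc2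
    exact Finset.sum_congr rfl fun i hi => by rw [hAy i (Finset.mem_range.1 hi)]; ring
  let φ : (ℝ × ℝ) →ₗ[ℝ] (V → ℝ) :=
    (LinearMap.fst ℝ ℝ ℝ).smulRight f1 + (LinearMap.snd ℝ ℝ ℝ).smulRight f2
  have hφ : ∀ p z, φ p z = p.1 * f1 z + p.2 * f2 z := by
    intro p z
    simp [φ]
  refine ⟨LinearMap.range φ, ?_, ?_⟩
  · rw [← LinearMap.range_comp, LinearMap.finrank_range_of_inj]
    · simp
    · intro p q hpq
      have e1 := congrFun hpq ⟨P 0, hx⟩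
      have e2 := congrFun hpq ⟨P L, hy⟩
      simp only [LinearMap.comp_apply, LinearMap.funLeft_apply, hφ, f1x, f1y, f2x, f2y] at e1 e2
      ext
      · linarith
      · linarith
  · rintro _ ⟨⟨a, b⟩, rfl⟩
    have hE := energy_path P L hinj A hA hA1 hA0 (fun i => a * c1 i - b * c2 i) b
      (φ (a, b)) (by
        intro z
        rw [hφ]
        simp only [f1, f2, mul_sub, mul_one, Finset.sum_sub_distrib, hc2, sub_mul]
        simp only [mul_assoc, ← Finset.mul_sum]
        ring)
    have hsq : ∑ i ∈ Finset.range L, (a * c1 i - b * c2 i) ^ 2 = (1 / (r : ℝ)) * (a ^ 2 + b ^ 2) := by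
      have : ∀ i ∈ Finset.range L, (a * c1 i - b * c2 i) ^ 2 =
          (a ^ 2 / r) * c1 i + (b ^ 2 / r) * c2 i := by
        intro i _
        simp only [c1, c2]
        split_ifs
        · omega
        all_goals (field_simp; try ring)
      rw [Finset.sum_congr rfl this, Finset.sum_add_distrib, ← Finset.mul_sum, ← Finset.mul_sum,
        hc1, hc2]
      ring
    have hne : P 0 ≠ P L := by
      intro h
      have := hinj 0 (by omega) L le_rfl h
      omega
    have hlow : a ^ 2 + b ^ 2 ≤ ∑ x ∈ B, (φ (a, b) x) ^ 2 := by
      have hsub : ({P 0, P L} : Finset V) ⊆ B := by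
        intro z hz
        simp only [Finset.mem_insert, Finset.mem_singleton] at hz
        rcases hz with rfl | rfl <;> assumption
      have := Finset.sum_le_sum_of_subset_of_nonneg (f := fun x => (φ (a, b) x) ^ 2) hsub
        (fun x _ _ => sq_nonneg _)
      rw [Finset.sum_pair hne] at this
      simp only [hφ, f1x, f1y, f2x, f2y] at this
      simp only [hφ]
      nlinarith [this]
    calc dirichletEnergy G (φ (a, b)) ≤ _ := hE
      _ = _ := hsq
      _ ≤ _ := mul_le_mul_of_nonneg_left hlow (by positivity)

lemma mem_stekSet_tree (hG : G.IsTree) (r b : ℕ) (hr : 1 ≤ r) (h2 : 2 ≤ Fintype.card V)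
    (hb : (leavesFinset G).card = b) (hn : b * r + 3 ≤ Fintype.card V + b) :
    (1 / (r : ℝ)) ∈ stekSet G (leavesFinset G) 2 := by
  obtain ⟨P, L, hL, hx, hy, hadj, hinj⟩ := exists_long_path hG r b hr h2 hb hn
  exact mem_stekSet_of_path hG _ P L r hr hL hx hy hadj hinj

end Upper
section Spider

/-- the truncated-subtraction parent -/
def spar (b n : ℕ) (u : Fin n) : Fin n := ⟨u.val - b, lt_of_le_of_lt (Nat.sub_le _ _) u.isLt⟩

/-- The spider: vertex `0` is the centre and `u > 0` is joined to `u - b` (truncated). -/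
def spider (b n : ℕ) : SimpleGraph (Fin n) where
  Adj u v := (0 < u.val ∧ v.val = u.val - b ∧ 0 < b) ∨ (0 < v.val ∧ u.val = v.val - b ∧ 0 < b)
  symm := ⟨fun u v h => h.symm⟩
  loopless := ⟨fun u h => by omega⟩

lemma spider_adj {b n : ℕ} {u v : Fin n} : (spider b n).Adj u v ↔
    (0 < u.val ∧ v.val = u.val - b ∧ 0 < b) ∨ (0 < v.val ∧ u.val = v.val - b ∧ 0 < b) := Iff.rfl

lemma spider_connected {b n : ℕ} (hb : 0 < b) (hn : 0 < n) : (spider b n).Connected := by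
  have h0 : ∀ k : ℕ, ∀ u : Fin n, u.val = k → (spider b n).Reachable u ⟨0, hn⟩ := by
    intro k
    induction k using Nat.strong_induction_on with
    | _ k ih =>
      intro u hu
      by_cases hk : k = 0
      · have : u = ⟨0, hn⟩ := Fin.ext (by simp; omega)
        rw [this]
      · have hadj : (spider b n).Adj u (spar b n u) := Or.inl ⟨by omega, rfl, hb⟩
        exact hadj.reachable.trans (ih (k - b) (by omega) _ (by simp [spar, hu]))
  have : Nonempty (Fin n) := ⟨⟨0, hn⟩⟩
  exact ⟨fun u v => (h0 _ u rfl).trans (h0 _ v rfl).symm⟩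

lemma spider_isTree {b n : ℕ} (hb : 0 < b) (hn : 0 < n) : (spider b n).IsTree := by
  classical
  have hc := spider_connected hb hn
  rw [SimpleGraph.isTree_iff_connected_and_card]
  refine ⟨hc, ?_⟩
  have hle := hc.card_vert_le_card_edgeSet_add_one
  have hge : Nat.card (spider b n).edgeSet ≤ n - 1 := by
    have hsub : (spider b n).edgeSet ⊆
        (((Finset.univ.erase (⟨0, hn⟩ : Fin n)).image fun u => s(u, spar b n u) :
          Finset (Sym2 (Fin n))) : Set (Sym2 (Fin n))) := by
      intro e
      induction e using Sym2.ind with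
      | _ u v =>
        intro h
        rw [SimpleGraph.mem_edgeSet, spider_adj] at h
        simp only [Finset.coe_image, Set.mem_image, Finset.coe_erase, Finset.coe_univ,
          Set.mem_diff, Set.mem_univ, true_and, Set.mem_singleton_iff]
        rcases h with ⟨h1, h2, -⟩ | ⟨h1, h2, -⟩
        · refine ⟨u, fun h => by simp [h] at h1, ?_⟩
          have : spar b n u = v := Fin.ext h2.symm
          rw [this]
        · refine ⟨v, fun h => by simp [h] at h1, ?_⟩
          have : spar b n v = u := Fin.ext h2.symm
          rw [this, Sym2.eq_swap]
    have h1 := Set.ncard_le_ncard hsub (Finset.finite_toSet _)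
    rw [Set.ncard_coe_finset] at h1
    have h2 : ((Finset.univ.erase (⟨0, hn⟩ : Fin n)).image fun u => s(u, spar b n u)).card ≤ n - 1 :=
      Finset.card_image_le.trans (by simp)
    rw [Nat.card_coe_set_eq]
    omega
  simp only [Nat.card_eq_fintype_card, Fintype.card_fin] at hle ⊢
  simp only [Nat.card_eq_fintype_card] at hge
  omega

lemma spider_leaves {b n : ℕ} (hb : 3 ≤ b) (hn : b + 1 ≤ n) (u : Fin n) :
    u ∈ leavesFinset (spider b n) ↔ n - b ≤ u.val := by
  rw [mem_leaves]
  constructor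
  · rintro ⟨w, hw, huniq⟩
    by_contra hcon
    by_cases hu : u.val = 0
    · have e1 := huniq ⟨1, by omega⟩ (Or.inr ⟨by simp, by simp; omega, by omega⟩)
      have e2 := huniq ⟨2, by omega⟩ (Or.inr ⟨by simp, by simp; omega, by omega⟩)
      have := e1.trans e2.symm
      simp at this
    · have e1 := huniq (spar b n u) (Or.inl ⟨by omega, rfl, by omega⟩)
      have e2 := huniq ⟨u.val + b, by omega⟩ (Or.inr ⟨by simp; omega, by simp, by omega⟩)
      have := congrArg Fin.val (e1.trans e2.symm)
      simp [spar] at this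
      omega
  · intro hu
    refine ⟨spar b n u, Or.inl ⟨by omega, rfl, by omega⟩, ?_⟩
    intro w hw
    rw [spider_adj] at hw
    apply Fin.ext
    simp only [spar]
    have := w.isLt
    omega

lemma spider_leaves_card {b n : ℕ} (hb : 3 ≤ b) (hn : b + 1 ≤ n) :
    (leavesFinset (spider b n)).card = b := by
  have : leavesFinset (spider b n) = Finset.Ici (⟨n - b, by omega⟩ : Fin n) := by
    ext u
    rw [spider_leaves hb hn, Finset.mem_Ici, Fin.le_def]
  rw [this, Fin.card_Ici]
  simp only
  omega

lemma spider_energy {b n : ℕ} (hb : 0 < b) (f : Fin n → ℝ) :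
    dirichletEnergy (spider b n) f = ∑ u, (f u - f (spar b n u)) ^ 2 := by
  have hpt : ∀ u v : Fin n, (if (spider b n).Adj u v then (f u - f v) ^ 2 else 0) =
      (if v = spar b n u then (f u - f v) ^ 2 else 0) +
      (if u = spar b n v then (f u - f v) ^ 2 else 0) := by
    intro u v
    by_cases huv : u = v
    · subst huv
      simp
    · have hne : u.val ≠ v.val := fun h => huv (Fin.ext h)
      by_cases h1 : v = spar b n u
      · have h1' : v.val = u.val - b := congrArg Fin.val h1
        have h2 : ¬ u = spar b n v := by
          intro h
          have : u.val = v.val - b := congrArg Fin.val h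
          omega
        have h3 : (spider b n).Adj u v := Or.inl ⟨by omega, h1', hb⟩
        rw [if_pos h3, if_pos h1, if_neg h2, add_zero]
      · by_cases h2 : u = spar b n v
        · have h2' : u.val = v.val - b := congrArg Fin.val h2
          have h3 : (spider b n).Adj u v := Or.inr ⟨by omega, h2', hb⟩
          rw [if_pos h3, if_neg h1, if_pos h2, zero_add]
        · have h3 : ¬ (spider b n).Adj u v := by
            rintro (⟨-, h, -⟩ | ⟨-, h, -⟩)
            · exact h1 (Fin.ext h)
            · exact h2 (Fin.ext h)
          rw [if_neg h3, if_neg h1, if_neg h2, add_zero]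
  unfold dirichletEnergy
  simp only [hpt, Finset.sum_add_distrib]
  have e1 : ∑ u : Fin n, ∑ v : Fin n, (if v = spar b n u then (f u - f v) ^ 2 else 0) =
      ∑ u, (f u - f (spar b n u)) ^ 2 := by
    apply Finset.sum_congr rfl
    intro u _
    simp
  have e2 : ∑ u : Fin n, ∑ v : Fin n, (if u = spar b n v then (f u - f v) ^ 2 else 0) =
      ∑ u, (f u - f (spar b n u)) ^ 2 := by
    rw [Finset.sum_comm]
    apply Finset.sum_congr rfl
    intro u _
    simp only [Finset.sum_ite_eq', Finset.mem_univ, if_true]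
    ring
  rw [e1, e2]
  ring

lemma spar_iterate (b n : ℕ) (u : Fin n) (s : ℕ) : ((spar b n)^[s] u).val = u.val - s * b := by
  induction s with
  | zero => simp
  | succ s ih =>
    rw [Function.iterate_succ_apply']
    simp only [spar, ih]
    rw [Nat.succ_mul, Nat.sub_sub]

lemma spider_poincare {b n r : ℕ} (hb : 3 ≤ b) (hn : b + 1 ≤ n) (hnr : n ≤ b * r + 1)
    (f : Fin n → ℝ) :
    ∑ u ∈ leavesFinset (spider b n), (f u - f ⟨0, by omega⟩) ^ 2 ≤
      r * dirichletEnergy (spider b n) f := by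
  classical
  rw [spider_energy (by omega)]
  set g : Fin n → ℝ := fun u => (f u - f (spar b n u)) ^ 2 with hg
  have hleg : ∀ u ∈ leavesFinset (spider b n), (f u - f ⟨0, by omega⟩) ^ 2 ≤
      r * ∑ s ∈ Finset.range r, g ((spar b n)^[s] u) := by
    intro u _
    have hend : (spar b n)^[r] u = ⟨0, by omega⟩ := by
      apply Fin.ext
      rw [spar_iterate]
      have := u.isLt
      simp only
      rw [mul_comm]
      omega
    have htel : f u - f ⟨0, by omega⟩ =
        ∑ s ∈ Finset.range r, (f ((spar b n)^[s] u) - f (spar b n ((spar b n)^[s] u))) := by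
      rw [← hend]
      have := Finset.sum_range_sub' (fun s => f ((spar b n)^[s] u)) r
      simp only [Function.iterate_succ_apply', Function.iterate_zero, id] at this
      exact this.symm
    rw [htel]
    have := sq_sum_le_card_mul_sum_sq (s := Finset.range r)
      (f := fun s => f ((spar b n)^[s] u) - f (spar b n ((spar b n)^[s] u)))
    simpa [hg] using this
  refine (Finset.sum_le_sum hleg).trans ?_
  rw [← Finset.mul_sum]
  refine mul_le_mul_of_nonneg_left ?_ (by positivity)
  rw [← Finset.sum_product']
  set Q := (leavesFinset (spider b n)) ×ˢ Finset.range r with hQ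
  set ψ : Fin n × ℕ → Fin n := fun p => (spar b n)^[p.2] p.1 with hψ
  have hzero : ∀ p ∈ Q, g (ψ p) ≠ 0 → (ψ p).val ≠ 0 := by
    intro p _ hp h0
    apply hp
    have : spar b n (ψ p) = ψ p := Fin.ext (by simp only [spar]; omega)
    simp only [hg, this]
    ring
  have e1 : ∑ p ∈ Q, g (ψ p) = ∑ p ∈ Q.filter (fun p => (ψ p).val ≠ 0), g (ψ p) :=
    (Finset.sum_filter_of_ne hzero).symm
  have hinj : Set.InjOn ψ (Q.filter (fun p => (ψ p).val ≠ 0) : Finset (Fin n × ℕ)) := by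
    rintro ⟨u, s⟩ hu ⟨v, t⟩ hv huv
    simp only [hQ, Finset.coe_filter, Finset.mem_product, Set.mem_setOf_eq,
      spider_leaves hb hn, hψ, spar_iterate] at hu hv
    have h := congrArg Fin.val huv
    simp only [hψ, spar_iterate] at h
    obtain ⟨⟨hu1, -⟩, hu2⟩ := hu
    obtain ⟨⟨hv1, -⟩, hv2⟩ := hv
    have hun := u.isLt
    have hvn := v.isLt
    have hst : s = t := by
      rcases lt_trichotomy s t with hlt | heq | hgt
      · obtain ⟨d, rfl⟩ : ∃ d, t = s + 1 + d := ⟨t - (s + 1), by omega⟩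
        have : (s + 1 + d) * b = s * b + b + d * b := by ring
        rw [this] at h hv2
        omega
      · exact heq
      · obtain ⟨d, rfl⟩ : ∃ d, s = t + 1 + d := ⟨s - (t + 1), by omega⟩
        have : (t + 1 + d) * b = t * b + b + d * b := by ring
        rw [this] at h hu2
        omega
    subst hst
    have : u = v := Fin.ext (by omega)
    rw [this]
  change ∑ p ∈ Q, g (ψ p) ≤ _
  rw [e1, ← Finset.sum_image hinj]
  exact Finset.sum_le_sum_of_subset_of_nonneg (Finset.subset_univ _) (fun u _ _ => sq_nonneg _)

lemma spider_lower {b n r : ℕ} (hb : 3 ≤ b) (hr : 1 ≤ r) (hn : b + 1 ≤ n) (hnr : n ≤ b * r + 1)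
    {t : ℝ} (ht : t ∈ stekSet (spider b n) (leavesFinset (spider b n)) 2) : 1 / (r : ℝ) ≤ t := by
  obtain ⟨F, hF, hE⟩ := ht
  obtain ⟨f, hf, hs, hpos⟩ := exists_zero_sum _ F hF
  have h1 := hE f hf
  have h2 := spider_poincare hb hn hnr f
  have h3 : ∑ u ∈ leavesFinset (spider b n), (f u) ^ 2 ≤
      ∑ u ∈ leavesFinset (spider b n), (f u - f ⟨0, by omega⟩) ^ 2 := by
    have : ∑ u ∈ leavesFinset (spider b n), (f u - f ⟨0, by omega⟩) ^ 2 =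
        ∑ u ∈ leavesFinset (spider b n), (f u) ^ 2
          - 2 * f ⟨0, by omega⟩ * ∑ u ∈ leavesFinset (spider b n), f u
          + ∑ u ∈ leavesFinset (spider b n), (f ⟨0, by omega⟩) ^ 2 := by
      rw [Finset.mul_sum, ← Finset.sum_sub_distrib, ← Finset.sum_add_distrib]
      exact Finset.sum_congr rfl fun u _ => by ring
    rw [this, hs]
    have : 0 ≤ ∑ u ∈ leavesFinset (spider b n), (f ⟨0, by omega⟩) ^ 2 :=
      Finset.sum_nonneg fun u _ => sq_nonneg _
    linarith
  have hr0 : (0 : ℝ) < r := by positivity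
  rw [div_le_iff₀ hr0]
  have h4 : (r : ℝ) * dirichletEnergy (spider b n) f ≤
      r * (t * ∑ u ∈ leavesFinset (spider b n), (f u) ^ 2) :=
    mul_le_mul_of_nonneg_left h1 hr0.le
  by_contra hcon
  push Not at hcon
  nlinarith

end Spider

/-- Let `b ≥ 3`, `r ≥ 1`, and `m` be integers with `3 - b ≤ m ≤ 1`,
and set `n = b*r + m`; assume `n ≥ b + 1`. Then `σ_{2,max}(b,n) = 1/r`. -/
theorem stmt1 (b r : ℕ) (m : ℤ) (hb : 3 ≤ b) (hr : 1 ≤ r)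
    (hm1 : 3 - (b : ℤ) ≤ m) (hm2 : m ≤ 1)
    (n : ℕ) (hn : (n : ℤ) = b * r + m) (hnb : b + 1 ≤ n) :
    sigmaMax 2 b n = 1 / (r : ℝ) := by
  have hn1 : n ≤ b * r + 1 := by zify; linarith
  have hn2 : b * r + 3 ≤ n + b := by zify; linarith
  have hup : ∀ s ∈ { s : ℝ | ∃ G : SimpleGraph (Fin n), G.IsTree ∧ (leavesFinset G).card = b ∧
      s = steklovEig G (leavesFinset G) 2 }, s ≤ 1 / (r : ℝ) := by
    rintro s ⟨G, hG, hGb, rfl⟩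
    exact csInf_le ⟨0, fun t ht => stekSet_nonneg _ ht⟩
      (mem_stekSet_tree hG r b hr (by simp; omega) hGb (by simpa using hn2))
  have hmem : steklovEig (spider b n) (leavesFinset (spider b n)) 2 ∈
      { s : ℝ | ∃ G : SimpleGraph (Fin n), G.IsTree ∧ (leavesFinset G).card = b ∧
      s = steklovEig G (leavesFinset G) 2 } :=
    ⟨_, spider_isTree (by omega) (by omega), spider_leaves_card hb hnb, rfl⟩
  have hlow : 1 / (r : ℝ) ≤ steklovEig (spider b n) (leavesFinset (spider b n)) 2 := by
    refine le_csInf ⟨_, mem_stekSet_tree (spider_isTree (by omega) (by omega)) r b hr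
      (by simp; omega) (spider_leaves_card hb hnb) (by simpa using hn2)⟩ ?_
    intro t ht
    exact spider_lower hb hr hnb hn1 ht
  apply le_antisymm
  · exact csSup_le ⟨_, hmem⟩ hup
  · exact hlow.trans (le_csSup ⟨_, hup⟩ hmem)
end

section
/- Let b ≥ 3 and r ≥ 1 be integers and set n = br + 2. Then σ_{2,max}(b,n) = b/(b(r+1)−1) = 1/(r + 1 − 1/b), and the unique tree (up to isomorphism) with b leaves and n vertices attaining this maximum is the almost fork graph AF(b,r). -/
open scoped BigOperators
open Classical

/-- The almost fork graph `AF(b,r)`: `b` paths glued at a common endpoint (`Sum.inr false`),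
one of length `r+1` (path `0`, with extra tip `Sum.inr true`) and `b-1` of length `r`.
Vertex `Sum.inl (ℓ, i)` is the vertex of the `ℓ`-th path at distance `i+1` from the center. -/
def almostFork (b r : ℕ) : SimpleGraph ((Fin b × Fin r) ⊕ Bool) :=
  SimpleGraph.fromRel fun x y =>
    match x, y with
    | Sum.inr false, Sum.inl (_, i) => (i : ℕ) = 0
    | Sum.inl (ℓ, i), Sum.inl (m, j) => ℓ = m ∧ (j : ℕ) = (i : ℕ) + 1
    | Sum.inl (ℓ, i), Sum.inr true => (ℓ : ℕ) = 0 ∧ (i : ℕ) = r - 1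
    | _, _ => False


namespace SteklovAF

open SimpleGraph

variable {V : Type*}

/-- In a tree the neighbour closer to the root is unique. -/
lemma closer_unique {G : SimpleGraph V} (hG : G.IsTree) (c : V) {x y z : V}
    (hy : G.Adj x y) (hz : G.Adj x z) (dy : G.dist c y + 1 = G.dist c x)
    (dz : G.dist c z + 1 = G.dist c x) : y = z := by
  obtain ⟨p, hp⟩ := hG.connected.exists_walk_length_eq_dist c y
  obtain ⟨q, hq⟩ := hG.connected.exists_walk_length_eq_dist c z
  have h1 : (p.concat hy.symm).IsPath :=
    Walk.isPath_of_length_eq_dist _ (by rw [Walk.length_concat]; omega)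
  have h2 : (q.concat hz.symm).IsPath :=
    Walk.isPath_of_length_eq_dist _ (by rw [Walk.length_concat]; omega)
  have h3 := (hG.existsUnique_path c x).unique h1 h2
  have h4 := congrArg Walk.penultimate h3
  simpa using h4

/-- A vertex different from the root has a neighbour closer to the root. -/
lemma exists_closer {G : SimpleGraph V} (hG : G.IsTree) {c x : V} (h : x ≠ c) :
    ∃ y, G.Adj x y ∧ G.dist c y + 1 = G.dist c x := by
  obtain ⟨p, hp⟩ := hG.connected.exists_walk_length_eq_dist x c
  cases p with
  | nil => exact absurd rfl h
  | @cons _ y _ hadj p =>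
    refine ⟨y, hadj, ?_⟩
    have h1 := G.dist_le p
    rw [Walk.length_cons] at hp
    have h2 := hG.dist_eq_dist_add_one_of_adj c hadj
    rw [dist_comm (u := c) (v := y), dist_comm (u := c) (v := x)] at h2 ⊢
    have := hG.connected.dist_triangle (u := x) (v := y) (w := c)
    have h3 : G.dist x y = 1 := dist_eq_one_iff_adj.2 hadj
    omega

lemma dist_step {G : SimpleGraph V} (hG : G.IsTree) (c : V) {x y : V} (h : G.Adj x y) :
    G.dist c y + 1 = G.dist c x ∨ G.dist c y = G.dist c x + 1 := by
  have h2 := hG.dist_eq_dist_add_one_of_adj c h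
  omega

/-- One side of an edge of the tree. -/
lemma edge_sep {G : SimpleGraph V} (hG : G.IsTree) {c c' : V} (hcc : G.Adj c c') (x : V)
    (hx : G.dist x c' = G.dist x c + 1) :
    ∀ (k : ℕ) (y : V), G.dist y c' = k → G.dist y c = G.dist y c' + 1 →
      G.dist x y = G.dist x c + 1 + G.dist c' y := by
  intro k
  induction k using Nat.strong_induction_on with
  | _ k ih =>
    intro y hk hy
    by_cases hyc : y = c'
    · subst hyc
      simp [hx]
    have tri : ∀ a b d, G.dist a d ≤ G.dist a b + G.dist b d := fun a b d =>
      hG.connected.dist_triangle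
    have step : ∀ y, y ≠ c' → G.dist y c = G.dist y c' + 1 →
        ∃ p, G.Adj y p ∧ G.dist p c' + 1 = G.dist y c' ∧ G.dist p c = G.dist p c' + 1 := by
      intro y hyc hy
      obtain ⟨p, hp, hpd⟩ := exists_closer hG hyc
      refine ⟨p, hp, ?_, ?_⟩
      · rw [dist_comm, dist_comm (u := y)]; exact hpd
      · have h1 := tri y p c
        have h2 : G.dist y p = 1 := dist_eq_one_iff_adj.2 hp
        have h3 := tri p c' c
        have h4 : G.dist c' c = 1 := dist_eq_one_iff_adj.2 hcc.symm
        rw [dist_comm (u := c'), dist_comm (u := c')] at hpd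
        omega
    obtain ⟨p, hp, hpd, hps⟩ := step y hyc hy
    have ihp := ih _ (by omega) p rfl hps
    rw [dist_comm (u := c')] at ihp ⊢
    rcases dist_step hG x hp with h | h
    · omega
    · exfalso
      by_cases hpc : p = c'
      · subst hpc
        have := closer_unique hG x hcc.symm hp.symm (by omega) (by omega)
        subst this
        simp at hy
      · obtain ⟨pp, hpp, hppd, hpps⟩ := step p hpc hps
        have ihpp := ih _ (by omega) pp rfl hpps
        rw [dist_comm (u := c')] at ihpp
        have := closer_unique hG x hpp hp.symm (by omega) (by omega)
        subst this
        omega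

/-- A vertex on the geodesic from `c` to `x` is determined by its distance to `x`. -/
lemma geo_unique {G : SimpleGraph V} (hG : G.IsTree) (c x : V) :
    ∀ (k : ℕ) (u v : V), G.dist u x = k → G.dist v x = k →
      G.dist c x = G.dist c u + G.dist u x → G.dist c x = G.dist c v + G.dist v x → u = v := by
  have tri : ∀ a b d, G.dist a d ≤ G.dist a b + G.dist b d := fun a b d =>
      hG.connected.dist_triangle
  intro k
  induction k with
  | zero =>
    intro u v hu hv _ _
    rw [hG.connected.dist_eq_zero_iff] at hu hv
    rw [hu, hv]
  | succ k ih =>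
    have step : ∀ u, G.dist u x = k + 1 → G.dist c x = G.dist c u + G.dist u x →
        ∃ p, G.Adj u p ∧ G.dist p x = k ∧ G.dist c p = G.dist c u + 1 := by
      intro u hu hcu
      have hne : u ≠ x := by
        rintro rfl
        simp at hu
      obtain ⟨p, hp, hpd⟩ := exists_closer hG hne
      rw [dist_comm (u := x), dist_comm (u := x)] at hpd
      refine ⟨p, hp, by omega, ?_⟩
      have h1 := tri c p x
      have h2 := tri c u p
      have h3 : G.dist u p = 1 := dist_eq_one_iff_adj.2 hp
      omega
    intro u v hu hv hcu hcv
    obtain ⟨p, hp, hp1, hp2⟩ := step u hu hcu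
    obtain ⟨q, hq, hq1, hq2⟩ := step v hv hcv
    have := ih p q hp1 hq1 (by omega) (by omega)
    subst this
    exact closer_unique hG c hp.symm hq.symm (by omega) (by omega)

lemma mem_leaves [Fintype V] {G : SimpleGraph V} {v : V} :
    v ∈ leavesFinset G ↔ ∃! w, G.Adj v w := by
  unfold leavesFinset
  rw [Finset.mem_filter, degree_eq_one_iff_existsUnique_adj]
  simp

/-- Every non-root vertex lies on a geodesic from the root to a leaf. -/
lemma exists_leaf_below [Fintype V] {G : SimpleGraph V} (hG : G.IsTree) {c v : V} (hv : v ≠ c) :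
    ∃ x ∈ leavesFinset G, G.dist c x = G.dist c v + G.dist v x := by
  have tri : ∀ a b d, G.dist a d ≤ G.dist a b + G.dist b d := fun a b d =>
      hG.connected.dist_triangle
  obtain ⟨x, hx, hmax⟩ := Finset.exists_max_image
    (Finset.univ.filter fun x => G.dist c x = G.dist c v + G.dist v x) (fun x => G.dist c x)
    ⟨v, by simp⟩
  simp only [Finset.mem_filter, Finset.mem_univ, true_and] at hx hmax
  refine ⟨x, ?_, hx⟩
  have hxc : x ≠ c := by
    rintro rfl
    have := hG.connected.pos_dist_of_ne hv.symm
    simp at hx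
    omega
  obtain ⟨p, hp, hpd⟩ := exists_closer hG hxc
  rw [mem_leaves]
  refine ⟨p, hp, ?_⟩
  intro y hy
  rcases dist_step hG c hy with h | h
  · exact closer_unique hG c hy hp h hpd
  · exfalso
    have h1 := tri v x y
    have h2 := tri c v y
    have h3 : G.dist x y = 1 := dist_eq_one_iff_adj.2 hy
    have := hmax y (by omega)
    omega

end SteklovAF

namespace SteklovAF

open SimpleGraph

variable {V : Type*} [Fintype V]

set_option linter.unusedSectionVars false

/-- The set whose infimum is the second Steklov eigenvalue. -/
def eigSet (G : SimpleGraph V) (B : Finset V) : Set ℝ :=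
  { t : ℝ | ∃ F : Submodule ℝ (V → ℝ),
    Module.finrank ℝ (F.map (LinearMap.funLeft ℝ ℝ (fun x : {v // v ∈ B} => (x : V)))) = 2 ∧
    ∀ f ∈ F, dirichletEnergy G f ≤ t * ∑ x ∈ B, (f x) ^ 2 }

lemma steklov_eq (G : SimpleGraph V) (B : Finset V) : steklovEig G B 2 = sInf (eigSet G B) := rfl

lemma energy_nonneg (G : SimpleGraph V) (f : V → ℝ) : 0 ≤ dirichletEnergy G f := by
  unfold dirichletEnergy
  apply div_nonneg _ zero_le_two
  refine Finset.sum_nonneg fun x _ => Finset.sum_nonneg fun y _ => ?_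
  split_ifs <;> positivity

/-- In the trial space there is a function with zero boundary mean and nonzero boundary data. -/
lemma exists_mean_zero {B : Finset V} (F : Submodule ℝ (V → ℝ))
    (hF : Module.finrank ℝ (F.map (LinearMap.funLeft ℝ ℝ (fun x : {v // v ∈ B} => (x : V)))) = 2) :
    ∃ f ∈ F, ∑ x ∈ B, f x = 0 ∧ 0 < ∑ x ∈ B, (f x) ^ 2 := by
  set R := LinearMap.funLeft ℝ ℝ (fun x : {v // v ∈ B} => (x : V)) with hR
  let φ : ({v // v ∈ B} → ℝ) →ₗ[ℝ] ℝ :=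
    { toFun := fun g => ∑ i, g i
      map_add' := by intro a b; simp [Finset.sum_add_distrib]
      map_smul' := by intro a b; simp [Finset.mul_sum] }
  let ψ : (F.map R) →ₗ[ℝ] ℝ := φ.comp (F.map R).subtype
  have hker : ¬ Function.Injective ψ := by
    intro hinj
    have := LinearMap.finrank_le_finrank_of_injective hinj
    rw [hF] at this
    simp at this
  have : ∃ g : F.map R, ψ g = 0 ∧ g ≠ 0 := by
    by_contra hcon
    push Not at hcon
    exact hker ((injective_iff_map_eq_zero ψ).2 hcon)
  obtain ⟨⟨g, hg⟩, hg0, hgne⟩ := this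
  obtain ⟨f, hfF, rfl⟩ := Submodule.mem_map.1 hg
  refine ⟨f, hfF, ?_, ?_⟩
  · have : ∑ i : {v // v ∈ B}, f i = 0 := hg0
    rwa [Finset.sum_coe_sort B f] at this
  · by_contra hcon
    have h0 : ∑ x ∈ B, (f x) ^ 2 = 0 :=
      le_antisymm (not_lt.1 hcon) (Finset.sum_nonneg fun x _ => sq_nonneg _)
    rw [Finset.sum_eq_zero_iff_of_nonneg (fun x _ => sq_nonneg _)] at h0
    apply hgne
    ext i
    have := h0 i.1 i.2
    simpa [hR, LinearMap.funLeft_apply] using this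

lemma eigSet_bddBelow (G : SimpleGraph V) (B : Finset V) : BddBelow (eigSet G B) := by
  refine ⟨0, ?_⟩
  rintro t ⟨F, hF, h⟩
  obtain ⟨f, hf, _, hpos⟩ := exists_mean_zero F hF
  have h1 := h f hf
  have h2 := energy_nonneg G f
  by_contra hneg
  push Not at hneg
  nlinarith

lemma steklov_le {G : SimpleGraph V} {B : Finset V} {t : ℝ} (h : t ∈ eigSet G B) :
    steklovEig G B 2 ≤ t := csInf_le (eigSet_bddBelow G B) h

lemma le_steklov {G : SimpleGraph V} {B : Finset V} {t : ℝ} (hne : (eigSet G B).Nonempty)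
    (h : ∀ f : V → ℝ, ∑ x ∈ B, f x = 0 → t * ∑ x ∈ B, (f x) ^ 2 ≤ dirichletEnergy G f) :
    t ≤ steklovEig G B 2 := by
  refine le_csInf hne ?_
  rintro s ⟨F, hF, hs⟩
  obtain ⟨f, hf, hmean, hpos⟩ := exists_mean_zero F hF
  have h1 := hs f hf
  have h2 := h f hmean
  exact le_of_mul_le_mul_right (h2.trans h1) hpos

lemma energy_green (G : SimpleGraph V) (f : V → ℝ) :
    dirichletEnergy G f = ∑ x, f x * ∑ y, if G.Adj x y then f x - f y else 0 := by
  unfold dirichletEnergy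
  have h1 : ∑ x, ∑ y, (if G.Adj x y then (f x - f y) ^ 2 else 0)
      = (∑ x, ∑ y, if G.Adj x y then f x * (f x - f y) else 0)
        + ∑ x, ∑ y, if G.Adj x y then f y * (f y - f x) else 0 := by
    simp only [← Finset.sum_add_distrib]
    refine Finset.sum_congr rfl fun x _ => Finset.sum_congr rfl fun y _ => ?_
    split_ifs <;> ring
  have h2 : (∑ x, ∑ y, if G.Adj x y then f y * (f y - f x) else 0)
      = ∑ x, ∑ y, if G.Adj x y then f x * (f x - f y) else 0 := by
    rw [Finset.sum_comm]
    refine Finset.sum_congr rfl fun x _ => Finset.sum_congr rfl fun y _ => ?_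
    simp only [G.adj_comm]
  rw [h1, h2]
  simp only [Finset.mul_sum, mul_ite, mul_zero]
  ring

lemma energy_affine (G : SimpleGraph V) (f : V → ℝ) (α β : ℝ) :
    dirichletEnergy G (fun x => α * f x + β) = α ^ 2 * dirichletEnergy G f := by
  unfold dirichletEnergy
  rw [mul_div_assoc', Finset.mul_sum]
  simp only [Finset.mul_sum, mul_ite, mul_zero]
  congr 1
  refine Finset.sum_congr rfl fun x _ => Finset.sum_congr rfl fun y _ => ?_
  split_ifs <;> ring

lemma lapl_dist {G : SimpleGraph V} (hG : G.IsTree) (c x : V) :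
    (∑ y, if G.Adj x y then ((G.dist c x : ℝ) - G.dist c y) else 0)
      = 2 - (∑ y, if G.Adj x y then (1 : ℝ) else 0) - (if x = c then 2 else 0) := by
  by_cases hx : x = c
  · subst hx
    simp only [if_true]
    have : ∀ y, (if G.Adj x y then ((G.dist x x : ℝ) - G.dist x y) else 0)
        = - (if G.Adj x y then (1 : ℝ) else 0) := by
      intro y
      split_ifs with h
      · rw [dist_eq_one_iff_adj.2 h]; simp
      · simp
    simp only [this, Finset.sum_neg_distrib]
    ring
  · obtain ⟨p, hp, hpd⟩ := exists_closer hG hx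
    have : ∀ y, (if G.Adj x y then ((G.dist c x : ℝ) - G.dist c y) else 0)
        = (if y = p then 2 else 0) - (if G.Adj x y then (1 : ℝ) else 0) := by
      intro y
      by_cases hy : y = p
      · subst hy
        simp only [hp, if_true]
        rw [← hpd]; push_cast; ring
      · simp only [hy, if_false]
        split_ifs with h
        · rcases dist_step hG c h with h' | h'
          · exact absurd (closer_unique hG c h hp h' hpd) hy
          · rw [h']; push_cast; ring
        · simp
    simp only [this, Finset.sum_sub_distrib, hx, if_false]
    simp

/-- Trial value coming from a charge `q` on the boundary. -/
lemma charge_mem {G : SimpleGraph V} (hG : G.IsTree) (B : Finset V) (q : V → ℝ)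
    (hq0 : ∀ x, x ∉ B → q x = 0) (hq : ∑ x, q x = 0) (E : ℝ)
    (hE : E = -(1/2) * ∑ x ∈ B, ∑ i ∈ B, q x * q i * G.dist i x) (hpos : 0 < E) :
    (∑ x ∈ B, q x ^ 2) / E ∈ eigSet G B := by
  let f : V → ℝ := fun x => -(1/2) * ∑ i, q i * G.dist i x
  have hlap : ∀ x, (∑ y, if G.Adj x y then f x - f y else 0) = q x := by
    intro x
    have h1 : ∀ y, (if G.Adj x y then f x - f y else 0)
        = -(1/2) * ∑ i, q i * (if G.Adj x y then ((G.dist i x : ℝ) - G.dist i y) else 0) := by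
      intro y
      split_ifs
      · simp only [f, mul_sub, Finset.sum_sub_distrib]
      · simp
    simp only [h1]
    rw [← Finset.mul_sum, Finset.sum_comm]
    simp only [← Finset.mul_sum, lapl_dist hG]
    simp only [mul_sub, Finset.sum_sub_distrib, ← Finset.sum_mul, hq]
    simp
    ring
  have hBsum : ∀ g : V → ℝ, ∑ x, q x * g x = ∑ x ∈ B, q x * g x := by
    intro g
    symm
    apply Finset.sum_subset (Finset.subset_univ _)
    intro x _ hx
    rw [hq0 x hx, zero_mul]
  have hqB : ∑ x ∈ B, q x = 0 := by
    have := hBsum (fun _ => 1)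
    simp only [mul_one] at this
    rw [← this, hq]
  have hqf : ∑ x ∈ B, q x * f x = E := by
    rw [hE, Finset.mul_sum]
    refine Finset.sum_congr rfl fun x _ => ?_
    simp only [f]
    rw [hBsum]
    rw [mul_left_comm, Finset.mul_sum]
    congr 1
    refine Finset.sum_congr rfl fun i _ => ?_
    ring
  have hEf : dirichletEnergy G f = E := by
    rw [energy_green]
    simp only [hlap]
    rw [← hqf, ← hBsum]
    exact Finset.sum_congr rfl fun x _ => mul_comm _ _
  have hcomb : ∀ α β : ℝ, ∑ x ∈ B, q x * (α * f x + β) = α * E := by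
    intro α β
    rw [← hqf, Finset.mul_sum]
    have : ∑ x ∈ B, q x * (α * f x + β) = ∑ x ∈ B, α * (q x * f x) + (∑ x ∈ B, q x) * β := by
      rw [Finset.sum_mul, ← Finset.sum_add_distrib]
      exact Finset.sum_congr rfl fun x _ => by ring
    rw [this, hqB]; ring
  set R := LinearMap.funLeft ℝ ℝ (fun x : {v // v ∈ B} => (x : V)) with hR
  refine ⟨Submodule.span ℝ (Set.range ![f, fun _ => 1]), ?_, ?_⟩
  · rw [Submodule.map_span, ← Set.range_comp]
    have hli : LinearIndependent ℝ (R ∘ ![f, fun _ => 1]) := by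
      have he : R ∘ ![f, fun _ => 1] = ![R f, R (fun _ => 1)] := by
        ext i; fin_cases i <;> rfl
      rw [he, LinearIndependent.pair_iff]
      intro s t hst
      have hpt : ∀ x ∈ B, s * f x + t = 0 := by
        intro x hx
        have := congrFun hst ⟨x, hx⟩
        simpa [hR, LinearMap.funLeft_apply] using this
      have hs : s = 0 := by
        have h1 := hcomb s t
        rw [Finset.sum_eq_zero (fun x hx => by rw [hpt x hx, mul_zero])] at h1
        rcases mul_eq_zero.1 h1.symm with h | h
        · exact h
        · exact absurd h hpos.ne'
      refine ⟨hs, ?_⟩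
      have hBne : B.Nonempty := by
        by_contra hB
        rw [Finset.not_nonempty_iff_eq_empty] at hB
        rw [← hqf, hB] at hpos
        simp at hpos
      obtain ⟨x, hx⟩ := hBne
      have := hpt x hx
      rw [hs] at this
      simpa using this
    rw [finrank_span_eq_card hli]
    simp
  · intro g hg
    simp only [Matrix.range_cons, Matrix.range_empty, Set.union_empty,
      Set.singleton_union, Submodule.mem_span_pair] at hg
    obtain ⟨α, β, rfl⟩ := hg
    have hfun : α • f + β • (fun _ : V => (1 : ℝ)) = fun x => α * f x + β := by
      ext x; simp
    rw [hfun, energy_affine, hEf]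
    have hcs := Finset.sum_mul_sq_le_sq_mul_sq B q (fun x => α * f x + β)
    rw [hcomb] at hcs
    rw [div_mul_eq_mul_div, le_div_iff₀ hpos]
    nlinarith

end SteklovAF

namespace SteklovAF

open SimpleGraph

/-- Parent in the almost fork rooted at its centre. -/
def afP (b r : ℕ) (hb : 0 < b) (hr : 0 < r) :
    (Fin b × Fin r) ⊕ Bool → (Fin b × Fin r) ⊕ Bool
  | Sum.inr false => Sum.inr false
  | Sum.inr true => Sum.inl (⟨0, hb⟩, ⟨r - 1, by omega⟩)
  | Sum.inl (l, i) => if (i : ℕ) = 0 then Sum.inr false else Sum.inl (l, ⟨i - 1, by omega⟩)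

/-- Height in the almost fork rooted at its centre. -/
def afH (b r : ℕ) : (Fin b × Fin r) ⊕ Bool → ℕ
  | Sum.inr false => 0
  | Sum.inr true => r + 1
  | Sum.inl (_, i) => i + 1

lemma afH_lt (b r : ℕ) (hb : 0 < b) (hr : 0 < r) (u) (hu : u ≠ Sum.inr false) :
    afH b r (afP b r hb hr u) + 1 = afH b r u := by
  rcases u with ⟨l, i⟩ | (_ | _)
  · simp only [afP]
    split_ifs with h
    · simp [afH, h]
    · simp only [afH]; omega
  · exact absurd rfl hu
  · simp only [afP, afH]; omega

lemma af_adj (b r : ℕ) (hb : 0 < b) (hr : 0 < r) (u v) :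
    (almostFork b r).Adj u v ↔
      (u ≠ Sum.inr false ∧ afP b r hb hr u = v) ∨ (v ≠ Sum.inr false ∧ afP b r hb hr v = u) := by
  rcases u with ⟨l, i⟩ | (_ | _) <;> rcases v with ⟨m, j⟩ | (_ | _)
  · simp only [almostFork, fromRel_adj, afP]
    split_ifs with h1 h2 h2 <;>
    simp only [ne_eq, Sum.inl.injEq, Prod.mk.injEq, Fin.ext_iff, reduceCtorEq, not_false_eq_true,
      true_and, false_or, or_false, iff_false] <;> omega
  all_goals
    simp only [almostFork, fromRel_adj, afP]
  all_goals
    first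
    | (split_ifs <;> simp_all [Fin.ext_iff] <;> omega)
    | simp

lemma af_tree (b r : ℕ) (hb : 0 < b) (hr : 0 < r) : (almostFork b r).IsTree := by
  have hconn : (almostFork b r).Connected := by
    rw [connected_iff_exists_forall_reachable]
    refine ⟨Sum.inr false, ?_⟩
    have : ∀ (k : ℕ) w, afH b r w = k → (almostFork b r).Reachable (Sum.inr false) w := by
      intro k
      induction k with
      | zero =>
        intro w hw
        by_cases h : w = Sum.inr false
        · rw [h]
        · have := afH_lt b r hb hr w h
          omega
      | succ k ih =>
        intro w hw
        by_cases h : w = Sum.inr false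
        · rw [h]
        · have h1 := afH_lt b r hb hr w h
          have h2 := ih (afP b r hb hr w) (by omega)
          exact h2.trans (((af_adj b r hb hr _ _).2 (Or.inr ⟨h, rfl⟩)).reachable)
    exact fun w => this _ w rfl
  rw [isTree_iff_connected_and_card]
  refine ⟨hconn, le_antisymm ?_ hconn.card_vert_le_card_edgeSet_add_one⟩
  have hsub : (almostFork b r).edgeSet ⊆
      ((Finset.univ.erase (Sum.inr false)).image
        (fun v => s(v, afP b r hb hr v)) : Finset (Sym2 ((Fin b × Fin r) ⊕ Bool))) := by
    intro e
    induction e using Sym2.ind with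
    | _ u v =>
      intro he
      rw [mem_edgeSet, af_adj b r hb hr] at he
      simp only [Finset.coe_image, Set.mem_image, Finset.mem_coe, Finset.mem_erase,
        Finset.mem_univ, and_true]
      rcases he with ⟨h1, h2⟩ | ⟨h1, h2⟩
      · exact ⟨u, h1, by rw [h2]⟩
      · exact ⟨v, h1, by rw [h2, Sym2.eq_swap]⟩
  have h1 := Set.ncard_le_ncard hsub (Finset.finite_toSet _)
  rw [Set.ncard_coe_finset] at h1
  have h2 := h1.trans Finset.card_image_le
  rw [Finset.card_erase_of_mem (Finset.mem_univ _), Finset.card_univ, Set.ncard_def] at h2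
  have h3 : 0 < Fintype.card ((Fin b × Fin r) ⊕ Bool) := Fintype.card_pos_iff.2 ⟨Sum.inr false⟩
  have h4 : Nat.card (almostFork b r).edgeSet = (almostFork b r).edgeSet.ncard := rfl
  rw [h4, Set.ncard_def, Nat.card_eq_fintype_card]
  omega

/-- The tip of arm `l`. -/
def afTip (b r : ℕ) (hr : 0 < r) (l : Fin b) : (Fin b × Fin r) ⊕ Bool :=
  if (l : ℕ) = 0 then Sum.inr true else Sum.inl (l, ⟨r - 1, by omega⟩)

lemma afTip_inj (b r : ℕ) (hr : 0 < r) : Function.Injective (afTip b r hr) := by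
  intro l m h
  unfold afTip at h
  split_ifs at h <;> simp_all [Fin.ext_iff]

lemma af_leaves (b r : ℕ) (hb : 3 ≤ b) (hr : 0 < r) :
    leavesFinset (almostFork b r) = Finset.univ.image (afTip b r hr) := by
  have hb' : 0 < b := by omega
  ext v
  rw [mem_leaves, Finset.mem_image]
  simp only [Finset.mem_univ, true_and]
  simp only [af_adj b r hb' hr]
  constructor
  · rintro ⟨w, hw, huniq⟩
    rcases v with ⟨l, i⟩ | (_ | _)
    · by_cases hi : (i : ℕ) + 1 < r
      · exfalso
        have h1 := huniq (afP b r hb' hr (Sum.inl (l, i))) (Or.inl ⟨by simp, rfl⟩)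
        have h2 := huniq (Sum.inl (l, ⟨i + 1, hi⟩)) (Or.inr ⟨by simp, by simp [afP]⟩)
        rw [← h2] at h1
        have h3 := congrArg (afH b r) h1
        have h4 := afH_lt b r hb' hr (Sum.inl (l, i)) (by simp)
        simp only [afH] at h3 h4
        omega
      · by_cases hl : (l : ℕ) = 0
        · exfalso
          have h1 := huniq (afP b r hb' hr (Sum.inl (l, i))) (Or.inl ⟨by simp, rfl⟩)
          have h2 := huniq (Sum.inr true) (Or.inr ⟨by simp, by
            simp only [afP, Sum.inl.injEq, Prod.mk.injEq, Fin.ext_iff]; omega⟩)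
          rw [← h2] at h1
          have h3 := congrArg (afH b r) h1
          have h4 := afH_lt b r hb' hr (Sum.inl (l, i)) (by simp)
          simp only [afH] at h3 h4
          omega
        · refine ⟨l, ?_⟩
          simp only [afTip, hl, if_false, Sum.inl.injEq, Prod.mk.injEq, Fin.ext_iff, true_and]
          omega
    · exfalso
      have h1 := huniq (Sum.inl (⟨0, by omega⟩, ⟨0, hr⟩)) (Or.inr ⟨by simp, by simp [afP]⟩)
      have h2 := huniq (Sum.inl (⟨1, by omega⟩, ⟨0, hr⟩)) (Or.inr ⟨by simp, by simp [afP]⟩)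
      rw [← h2] at h1
      simp at h1
    · exact ⟨⟨0, hb'⟩, by simp [afTip]⟩
  · rintro ⟨l, rfl⟩
    have hne : afTip b r hr l ≠ Sum.inr false := by unfold afTip; split_ifs <;> simp
    refine ⟨afP b r hb' hr (afTip b r hr l), Or.inl ⟨hne, rfl⟩, ?_⟩
    rintro y (⟨_, h⟩ | ⟨h1, h2⟩)
    · exact h.symm
    · exfalso
      rcases y with ⟨m, j⟩ | (_ | _)
      · simp only [afP, afTip] at h2
        split_ifs at h2 <;> simp [Fin.ext_iff] at h2 <;> omega
      · exact h1 rfl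
      · simp only [afP, afTip] at h2
        split_ifs at h2 <;> simp [Fin.ext_iff] at h2 <;> omega

lemma energy_ge {V : Type*} [Fintype V] (G : SimpleGraph V) (A : Finset V) (P : V → V) (h : V → ℕ)
    (hadj : ∀ v ∈ A, G.Adj v (P v)) (hh : ∀ v ∈ A, h (P v) + 1 = h v) (f : V → ℝ) :
    ∑ v ∈ A, (f v - f (P v)) ^ 2 ≤ dirichletEnergy G f := by
  have key : ∀ x y, (if x ∈ A ∧ y = P x then (f x - f y) ^ 2 else 0)
      + (if y ∈ A ∧ x = P y then (f x - f y) ^ 2 else 0)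
      ≤ if G.Adj x y then (f x - f y) ^ 2 else 0 := by
    intro x y
    by_cases h1 : x ∈ A ∧ y = P x
    · have h2 : ¬ (y ∈ A ∧ x = P y) := by
        rintro ⟨hy, hxy⟩
        have a1 := hh x h1.1
        have a2 := hh y hy
        rw [← h1.2] at a1
        rw [← hxy] at a2
        omega
      have h3 : G.Adj x y := by rw [h1.2]; exact hadj x h1.1
      rw [if_pos h1, if_neg h2, if_pos h3, add_zero]
    · by_cases h2 : y ∈ A ∧ x = P y
      · have h3 : G.Adj x y := by rw [h2.2]; exact (hadj y h2.1).symm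
        rw [if_neg h1, if_pos h2, if_pos h3, zero_add]
      · rw [if_neg h1, if_neg h2]
        rw [add_zero]
        split_ifs
        · positivity
        · exact le_refl _
  have s1 : ∑ x, ∑ y, (if x ∈ A ∧ y = P x then (f x - f y) ^ 2 else 0)
      = ∑ v ∈ A, (f v - f (P v)) ^ 2 := by
    rw [← Finset.sum_subset (Finset.subset_univ A)]
    · refine Finset.sum_congr rfl fun x hx => ?_
      simp [hx]
    · intro x _ hx
      simp [hx]
  have s2 : ∑ x, ∑ y, (if y ∈ A ∧ x = P y then (f x - f y) ^ 2 else 0)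
      = ∑ v ∈ A, (f v - f (P v)) ^ 2 := by
    rw [← s1, Finset.sum_comm]
    refine Finset.sum_congr rfl fun x _ => Finset.sum_congr rfl fun y _ => ?_
    split_ifs <;> ring
  unfold dirichletEnergy
  have := Finset.sum_le_sum fun x (_ : x ∈ Finset.univ) =>
    Finset.sum_le_sum fun y (_ : y ∈ Finset.univ) => key x y
  simp only [Finset.sum_add_distrib] at this
  rw [s1, s2] at this
  linarith

end SteklovAF

namespace SteklovAF

open SimpleGraph

lemma alg_key (N r P x c : ℝ) (hN : 0 < N) (hr : 0 < r) (hP : x ^ 2 ≤ N * P) :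
    (N + 1) / ((N + 1) * (r + 1) - 1) * (x ^ 2 + P)
      ≤ (P + 2 * c * x + N * c ^ 2) / r + (x - c) ^ 2 / (r + 1) := by
  have hD : (N + 1) * (r + 1) - 1 = N * (r + 1) + r := by ring
  rw [hD]
  have hDpos : 0 < N * (r + 1) + r := by positivity
  have key : (P + 2 * c * x + N * c ^ 2) / r + (x - c) ^ 2 / (r + 1)
      - (N + 1) / (N * (r + 1) + r) * (x ^ 2 + P)
      = (N * P - x ^ 2) / (r * (N * (r + 1) + r))
        + ((x + N * c) * (r + 1) - (x - c) * r) ^ 2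
          / (r * (r + 1) * (N * (r + 1) + r)) := by
    field_simp
    ring
  have h1 : 0 ≤ (N * P - x ^ 2) / (r * (N * (r + 1) + r)) :=
    div_nonneg (by linarith) (by positivity)
  have h2 : 0 ≤ ((x + N * c) * (r + 1) - (x - c) * r) ^ 2
          / (r * (r + 1) * (N * (r + 1) + r)) := by positivity
  linarith

lemma arm_ge (u : ℕ → ℝ) (r : ℕ) (hr : 0 < r) :
    (u r - u 0) ^ 2 / r ≤ ∑ k ∈ Finset.range r, (u (k + 1) - u k) ^ 2 := by
  have h := sq_sum_le_card_mul_sum_sq (s := Finset.range r) (f := fun k => u (k + 1) - u k)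
  rw [Finset.sum_range_sub, Finset.card_range] at h
  rw [div_le_iff₀ (by positivity)]
  linarith

lemma af_energy (b r : ℕ) (hb : 3 ≤ b) (hr : 0 < r) (f : (Fin b × Fin r) ⊕ Bool → ℝ)
    (hf : ∑ x ∈ leavesFinset (almostFork b r), f x = 0) :
    (b : ℝ) / ((b : ℝ) * ((r : ℝ) + 1) - 1) * ∑ x ∈ leavesFinset (almostFork b r), f x ^ 2
      ≤ dirichletEnergy (almostFork b r) f := by
  have hb' : 0 < b := by omega
  rw [af_leaves b r hb hr, Finset.sum_image (fun _ _ _ _ h => afTip_inj b r hr h)] at hf ⊢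
  have hE := energy_ge (almostFork b r) (Finset.univ.erase (Sum.inr false)) (afP b r hb' hr)
    (afH b r) (fun v hv => (af_adj b r hb' hr _ _).2 (Or.inl ⟨Finset.ne_of_mem_erase hv, rfl⟩))
    (fun v hv => afH_lt b r hb' hr v (Finset.ne_of_mem_erase hv)) f
  refine le_trans ?_ hE
  set c := f (Sum.inr false) with hc
  let z : Fin b := ⟨0, hb'⟩
  let u : Fin b → ℕ → ℝ := fun l k =>
    if k = 0 then c else if h : k - 1 < r then f (Sum.inl (l, ⟨k - 1, h⟩)) else 0
  have hsum : ∑ v ∈ Finset.univ.erase (Sum.inr false), (f v - f (afP b r hb' hr v)) ^ 2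
      = ∑ l : Fin b, ∑ k ∈ Finset.range r, (u l (k + 1) - u l k) ^ 2
        + (f (Sum.inr true) - u z r) ^ 2 := by
    have h0 : ∑ v ∈ Finset.univ.erase (Sum.inr false), (f v - f (afP b r hb' hr v)) ^ 2
        = ∑ v, (f v - f (afP b r hb' hr v)) ^ 2 := by
      apply Finset.sum_erase
      simp [afP]
    rw [h0, Fintype.sum_sum_type, Fintype.sum_prod_type, Fintype.sum_bool]
    have h1 : (f (Sum.inr false) - f (afP b r hb' hr (Sum.inr false))) ^ 2 = 0 := by simp [afP]
    rw [h1, add_zero]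
    congr 1
    · refine Finset.sum_congr rfl fun l _ => ?_
      rw [Finset.sum_range]
      refine Finset.sum_congr rfl fun i _ => ?_
      have a1 : u l (i + 1) = f (Sum.inl (l, i)) := by simp [u]
      have a2 : u l i = f (afP b r hb' hr (Sum.inl (l, i))) := by
        simp only [u, afP]
        split_ifs with h1 h2
        · rfl
        · rfl
        · omega
      rw [a1, a2]
    · have a2 : u z r = f (afP b r hb' hr (Sum.inr true)) := by
        simp only [u, afP]
        rw [if_neg (by omega), dif_pos (by omega)]
      rw [a2]
  rw [hsum]
  have hrR : (0 : ℝ) < r := by exact_mod_cast hr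
  have hu0 : ∀ l, u l 0 = c := by intro l; simp [u]
  have hur : ∀ l, l ≠ z → u l r = f (afTip b r hr l) := by
    intro l hl
    have hl' : (l : ℕ) ≠ 0 := fun h => hl (Fin.ext h)
    simp only [u, afTip]
    rw [if_neg (by omega), dif_pos (by omega), if_neg hl']
  have htip : afTip b r hr z = Sum.inr true := by simp [afTip, z]
  set g : Fin b → ℝ := fun l => f (afTip b r hr l) with hg
  set S := (Finset.univ : Finset (Fin b)).erase z with hS
  have split : ∀ F : Fin b → ℝ, ∑ l, F l = ∑ l ∈ S, F l + F z := fun F =>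
    (Finset.sum_erase_add Finset.univ F (Finset.mem_univ z)).symm
  have hcard : ((S.card : ℕ) : ℝ) = (b : ℝ) - 1 := by
    rw [hS, Finset.card_erase_of_mem (Finset.mem_univ _), Finset.card_univ, Fintype.card_fin,
      Nat.cast_sub (by omega)]
    simp
  have hsumS : ∑ l ∈ S, g l = - g z := by
    have := split g
    have h2 : ∑ l, g l = 0 := hf
    linarith
  have hP : (g z) ^ 2 ≤ ((b : ℝ) - 1) * ∑ l ∈ S, g l ^ 2 := by
    have h := sq_sum_le_card_mul_sum_sq (s := S) (f := g)
    rw [hsumS, hcard] at h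
    simpa using h
  have harms : ∑ l ∈ S, (g l - c) ^ 2 / r
      ≤ ∑ l ∈ S, ∑ k ∈ Finset.range r, (u l (k + 1) - u l k) ^ 2 := by
    refine Finset.sum_le_sum fun l hl => ?_
    have := arm_ge (u l) r hr
    rwa [hu0, hur l (Finset.ne_of_mem_erase hl)] at this
  have hexp : ∑ l ∈ S, (g l - c) ^ 2 / r
      = (∑ l ∈ S, g l ^ 2 + 2 * c * g z + ((b : ℝ) - 1) * c ^ 2) / r := by
    rw [← Finset.sum_div]
    congr 1
    have : ∀ l, (g l - c) ^ 2 = g l ^ 2 - 2 * c * g l + c ^ 2 := fun l => by ring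
    simp only [this, Finset.sum_add_distrib, Finset.sum_sub_distrib, ← Finset.mul_sum, hsumS,
      Finset.sum_const, nsmul_eq_mul, hcard]
    ring
  have hlong : (g z - c) ^ 2 / ((r : ℝ) + 1)
      ≤ ∑ k ∈ Finset.range r, (u z (k + 1) - u z k) ^ 2 + (f (Sum.inr true) - u z r) ^ 2 := by
    have h1 := arm_ge (u z) r hr
    rw [hu0] at h1
    have h2 : g z = f (Sum.inr true) := by simp only [hg, htip]
    rw [h2]
    set d := f (Sum.inr true)
    set w := u z r
    have h3 : (d - c) ^ 2 / ((r : ℝ) + 1) ≤ (w - c) ^ 2 / r + (d - w) ^ 2 := by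
      have : (w - c) ^ 2 / r + (d - w) ^ 2 - (d - c) ^ 2 / ((r : ℝ) + 1)
          = ((w - c) - r * (d - w)) ^ 2 / (r * (r + 1)) := by
        field_simp
        ring
      have h5 : 0 ≤ ((w - c) - r * (d - w)) ^ 2 / (r * (r + 1)) := by positivity
      linarith
    linarith
  have hbR : (3 : ℝ) ≤ b := by exact_mod_cast hb
  have hkey := alg_key ((b : ℝ) - 1) r (∑ l ∈ S, g l ^ 2) (g z) c (by linarith) hrR hP
  rw [sub_add_cancel] at hkey
  rw [split, split]
  calc _ = (b : ℝ) / ((b : ℝ) * ((r : ℝ) + 1) - 1) * (g z ^ 2 + ∑ l ∈ S, g l ^ 2) := by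
        rw [add_comm (g z ^ 2)]
    _ ≤ _ := hkey
    _ ≤ _ := by linarith

lemma energy_iso {V W : Type*} [Fintype V] [Fintype W] {G : SimpleGraph V} {H : SimpleGraph W}
    (φ : G ≃g H) (f : W → ℝ) : dirichletEnergy G (fun v => f (φ v)) = dirichletEnergy H f := by
  unfold dirichletEnergy
  congr 1
  rw [← Equiv.sum_comp φ.toEquiv]
  refine Finset.sum_congr rfl fun x _ => ?_
  rw [← Equiv.sum_comp φ.toEquiv]
  refine Finset.sum_congr rfl fun y _ => ?_
  have : H.Adj (φ.toEquiv x) (φ.toEquiv y) ↔ G.Adj x y := φ.map_adj_iff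
  simp only [this]
  rfl

lemma leaves_iso {V W : Type*} [Fintype V] [Fintype W] {G : SimpleGraph V} {H : SimpleGraph W}
    (φ : G ≃g H) : leavesFinset H = (leavesFinset G).map φ.toEquiv.toEmbedding := by
  ext w
  rw [Finset.mem_map_equiv, mem_leaves, mem_leaves]
  have hw : φ (φ.toEquiv.symm w) = w := φ.apply_symm_apply w
  constructor
  · rintro ⟨y, hy, hu⟩
    refine ⟨φ.symm y, φ.symm.map_adj_iff.2 hy, ?_⟩
    intro a ha
    have := hu (φ a) (by
      have := φ.map_adj_iff.2 ha
      rwa [hw] at this)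
    rw [← this]; simp
  · rintro ⟨y, hy, hu⟩
    refine ⟨φ y, ?_, ?_⟩
    · have := φ.map_adj_iff.2 hy
      rwa [hw] at this
    · intro a ha
      have := hu (φ.symm a) (φ.symm.map_adj_iff.2 ha)
      rw [← this]; simp

lemma iso_energy {V : Type*} [Fintype V] {G : SimpleGraph V} (b r : ℕ) (hb : 3 ≤ b) (hr : 0 < r)
    (φ : G ≃g almostFork b r) (f : V → ℝ) (hf : ∑ x ∈ leavesFinset G, f x = 0) :
    (b : ℝ) / ((b : ℝ) * ((r : ℝ) + 1) - 1) * ∑ x ∈ leavesFinset G, f x ^ 2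
      ≤ dirichletEnergy G f := by
  have h := af_energy b r hb hr (fun w => f (φ.symm w))
  have e := energy_iso φ (fun w => f (φ.symm w))
  rw [leaves_iso φ, Finset.sum_map, Finset.sum_map] at h
  simp only [RelIso.symm_apply_apply] at e
  rw [← e] at h
  simp only [Equiv.coe_toEmbedding] at h
  have hs : ∀ x, φ.symm (φ.toEquiv x) = x := fun x => φ.symm_apply_apply x
  simp only [hs] at h
  exact h hf

end SteklovAF

namespace SteklovAF

open SimpleGraph

variable {V : Type*} [Fintype V]

lemma getVert_dist {G : SimpleGraph V} (hG : G.IsTree) {c x : V} (w : G.Walk c x)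
    (hw : w.length = G.dist c x) {m : ℕ} (hm : m ≤ G.dist c x) :
    G.dist c (w.getVert m) = m ∧ G.dist (w.getVert m) x = G.dist c x - m := by
  have h1 := G.dist_le (w.take m)
  have h2 := G.dist_le (w.drop m)
  rw [Walk.take_length] at h1
  rw [Walk.drop_length] at h2
  have h3 := hG.connected.dist_triangle (u := c) (v := w.getVert m) (w := x)
  have h4 : min m w.length ≤ m := min_le_left _ _
  omega

lemma far_case {G : SimpleGraph V} (hG : G.IsTree) (b r : ℕ) (hb : 3 ≤ b) {i j : V}
    (hi : i ∈ leavesFinset G) (hj : j ∈ leavesFinset G) (hd : 2 * r + 2 ≤ G.dist i j) :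
    ∃ t ∈ eigSet G (leavesFinset G), t < (b : ℝ) / ((b : ℝ) * ((r : ℝ) + 1) - 1) := by
  have hij : i ≠ j := by
    rintro rfl
    simp at hd
  set q : V → ℝ := fun x => (if x = i then 1 else 0) - (if x = j then 1 else 0) with hq
  set B := leavesFinset G with hB
  have hsq : ∑ x ∈ B, q x ^ 2 = 2 := by
    have : ∀ x, q x ^ 2 = (if x = i then 1 else 0) + (if x = j then 1 else 0) := by
      intro x
      simp only [hq]
      split_ifs with h1 h2
      · exact absurd (h1.symm.trans h2) hij
      all_goals norm_num
    simp only [this, Finset.sum_add_distrib, Finset.sum_ite_eq', hi, hj, if_true]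
    norm_num
  have hE : (G.dist i j : ℝ) = -(1/2) * ∑ x ∈ B, ∑ k ∈ B, q x * q k * G.dist k x := by
    have h1 : ∀ x, ∑ k ∈ B, q x * q k * G.dist k x = q x * (G.dist i x - G.dist j x) := by
      intro x
      simp only [mul_assoc, ← Finset.mul_sum]
      congr 1
      simp only [hq, sub_mul, Finset.sum_sub_distrib, ite_mul, one_mul, zero_mul,
        Finset.sum_ite_eq', hi, hj, if_true]
    simp only [h1]
    simp only [hq, sub_mul, Finset.sum_sub_distrib, ite_mul, one_mul, zero_mul,
        Finset.sum_ite_eq', hi, hj, if_true]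
    rw [dist_comm (u := j) (v := i)]
    simp
    ring
  have hdR : (2 * r + 2 : ℝ) ≤ G.dist i j := by exact_mod_cast hd
  have hpos : (0 : ℝ) < G.dist i j := by
    have : (0 : ℝ) ≤ r := Nat.cast_nonneg r
    linarith
  refine ⟨_, charge_mem hG B q ?_ ?_ _ hE hpos, ?_⟩
  · intro x hx
    have h1 : x ≠ i := fun h => hx (h ▸ hi)
    have h2 : x ≠ j := fun h => hx (h ▸ hj)
    simp [hq, h1, h2]
  · simp [hq]
  · rw [hsq]
    have hbR : (3 : ℝ) ≤ b := by exact_mod_cast hb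
    have hr0 : (0 : ℝ) ≤ r := Nat.cast_nonneg r
    rw [div_lt_div_iff₀ hpos (by nlinarith)]
    nlinarith

lemma two_sided {G : SimpleGraph V} (hG : G.IsTree) (b r : ℕ) (hb : 3 ≤ b)
    (hcard : (leavesFinset G).card = b) (L : Finset V) (hL : L ⊆ leavesFinset G)
    (h1 : 1 ≤ L.card) (h2 : 1 ≤ (leavesFinset G \ L).card)
    (dL : ∀ x ∈ L, ∀ y ∈ L, G.dist y x ≤ 2 * r)
    (dL' : ∀ x ∈ leavesFinset G \ L, ∀ y ∈ leavesFinset G \ L, G.dist y x ≤ 2 * r)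
    (dX : ∀ x ∈ L, ∀ y ∈ leavesFinset G \ L, 2 * r + 1 ≤ G.dist x y) :
    ∃ t ∈ eigSet G (leavesFinset G), t ≤ (b : ℝ) / ((b : ℝ) * ((r : ℝ) + 1) - 1) ∧
      (2 ≤ L.card → 2 ≤ (leavesFinset G \ L).card →
        t < (b : ℝ) / ((b : ℝ) * ((r : ℝ) + 1) - 1)) := by
  set B := leavesFinset G with hB
  set L' := B \ L with hL'
  have hdisj : Disjoint L L' := Finset.disjoint_sdiff
  have hun : L ∪ L' = B := Finset.union_sdiff_of_subset hL
  obtain ⟨s, hs⟩ : ∃ s : ℝ, s = (L.card : ℝ) := ⟨_, rfl⟩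
  obtain ⟨s', hs'⟩ : ∃ s' : ℝ, s' = (L'.card : ℝ) := ⟨_, rfl⟩
  have hs1 : 1 ≤ s := by rw [hs]; exact_mod_cast h1
  have hs1' : 1 ≤ s' := by rw [hs']; exact_mod_cast h2
  have hss : s + s' = b := by
    have := Finset.card_union_of_disjoint hdisj
    rw [hun, hcard] at this
    rw [this, hs, hs']; push_cast; rfl
  set q : V → ℝ := fun x => if x ∈ L then 1 / s else if x ∈ L' then -(1 / s') else 0 with hq
  set ε : V → ℝ := fun x => if x ∈ L then 1 else -1 with hε
  have qL : ∀ x ∈ L, q x = 1 / s := fun x hx => by simp [hq, hx]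
  have nL : ∀ x ∈ L', x ∉ L := fun x hx => (Finset.mem_sdiff.1 hx).2
  have qL' : ∀ x ∈ L', q x = -(1 / s') := fun x hx => by simp [hq, hx, nL x hx]
  have εL : ∀ x ∈ L, ε x = 1 := fun x hx => by simp [hε, hx]
  have εL' : ∀ x ∈ L', ε x = -1 := fun x hx => by simp [hε, nL x hx]
  have sumB : ∀ F : V → ℝ, ∑ x ∈ B, F x = ∑ x ∈ L, F x + ∑ x ∈ L', F x := by
    intro F
    rw [← hun, Finset.sum_union hdisj]
  have hqsum : ∑ x ∈ B, q x = 0 := by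
    rw [sumB, Finset.sum_congr rfl qL, Finset.sum_congr rfl qL']
    simp only [Finset.sum_const, nsmul_eq_mul, ← hs, ← hs']
    field_simp
    ring
  have hqε : ∑ x ∈ B, q x * ε x = 2 := by
    rw [sumB, Finset.sum_congr rfl (fun x hx => by rw [qL x hx, εL x hx]),
      Finset.sum_congr (s₁ := L') rfl (fun x hx => by rw [qL' x hx, εL' x hx])]
    simp only [Finset.sum_const, nsmul_eq_mul, ← hs, ← hs']
    field_simp
    ring
  have hqsq : ∑ x ∈ B, q x ^ 2 = b / (s * s') := by
    rw [sumB, Finset.sum_congr rfl (fun x hx => by rw [qL x hx]),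
      Finset.sum_congr (s₁ := L') rfl (fun x hx => by rw [qL' x hx]), ← hss]
    simp only [Finset.sum_const, nsmul_eq_mul, ← hs, ← hs']
    field_simp
    ring
  have hpt : ∀ x ∈ B, ∀ y ∈ B, q x * q y * G.dist y x
      ≤ (2 * r + 1 / 2) * (q x * q y) - (1 / 2) * ((q x * ε x) * (q y * ε y))
        - (if x = y then 2 * r * q x ^ 2 else 0) := by
    intro x hx y hy
    by_cases hxy : x = y
    · subst hxy
      have : ε x ^ 2 = 1 := by
        simp only [hε]; split_ifs <;> norm_num
      simp only [dist_self, if_true]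
      have h3 : (q x * ε x) * (q x * ε x) = q x ^ 2 * ε x ^ 2 := by ring
      rw [h3, this]
      apply le_of_eq
      push_cast
      ring
    · rw [if_neg hxy, sub_zero]
      rw [← hun, Finset.mem_union] at hx hy
      have hp : 0 < 1 / s := by positivity
      have hp' : 0 < 1 / s' := by positivity
      rcases hx with hx | hx <;> rcases hy with hy | hy
      · have hd : (G.dist y x : ℝ) ≤ 2 * r := by exact_mod_cast dL x hx y hy
        rw [qL x hx, qL y hy, εL x hx, εL y hy]
        have := mul_le_mul_of_nonneg_left hd (mul_pos hp hp).le
        linarith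
      · have hd : (2 * r + 1 : ℝ) ≤ G.dist y x := by
          rw [dist_comm]; exact_mod_cast dX x hx y hy
        rw [qL x hx, qL' y hy, εL x hx, εL' y hy]
        have := mul_le_mul_of_nonneg_left hd (mul_pos hp hp').le
        linarith
      · have hd : (2 * r + 1 : ℝ) ≤ G.dist y x := by
          exact_mod_cast dX y hy x hx
        rw [qL' x hx, qL y hy, εL' x hx, εL y hy]
        have := mul_le_mul_of_nonneg_left hd (mul_pos hp hp').le
        linarith
      · have hd : (G.dist y x : ℝ) ≤ 2 * r := by exact_mod_cast dL' x hx y hy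
        rw [qL' x hx, qL' y hy, εL' x hx, εL' y hy]
        have := mul_le_mul_of_nonneg_left hd (mul_pos hp' hp').le
        linarith
  set Q : ℝ := b / (s * s') with hQ
  have hrhs : ∑ x ∈ B, ∑ y ∈ B, ((2 * r + 1 / 2) * (q x * q y)
      - (1 / 2) * ((q x * ε x) * (q y * ε y))
        - (if x = y then 2 * r * q x ^ 2 else 0)) = -2 - 2 * r * Q := by
    simp only [Finset.sum_sub_distrib, ← Finset.mul_sum]
    simp only [← Finset.sum_mul, hqsum, hqε]
    have : ∑ x ∈ B, ∑ y ∈ B, (if x = y then 2 * r * q x ^ 2 else 0) = 2 * r * Q := by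
      rw [← hqsq, Finset.mul_sum]
      refine Finset.sum_congr rfl fun x hx => ?_
      rw [Finset.sum_ite_eq, if_pos hx]
    rw [this]
    ring
  have hle := Finset.sum_le_sum fun x hx => Finset.sum_le_sum fun y hy => hpt x hx y hy
  rw [hrhs] at hle
  set E : ℝ := -(1/2) * ∑ x ∈ B, ∑ y ∈ B, q x * q y * G.dist y x with hE
  have hEge : 1 + r * Q ≤ E := by rw [hE]; linarith
  have hbR : (3 : ℝ) ≤ b := by exact_mod_cast hb
  have hr0 : (0 : ℝ) ≤ r := Nat.cast_nonneg r
  have hQpos : 0 < Q := by rw [hQ]; positivity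
  have hEpos : 0 < E := by nlinarith
  have hDpos : (0 : ℝ) < b * (r + 1) - 1 := by nlinarith
  have hprod : (b : ℝ) - 1 ≤ s * s' := by nlinarith
  have hQss : Q * (s * s') = b := by rw [hQ]; field_simp
  refine ⟨_, charge_mem hG B q ?_ ?_ E hE hEpos, ?_, ?_⟩
  · intro x hx
    have h3 : x ∉ L := fun h => hx (hL h)
    have h4 : x ∉ L' := fun h => hx (Finset.mem_sdiff.1 h).1
    simp [hq, h3, h4]
  · rw [← hqsum]
    symm
    apply Finset.sum_subset (Finset.subset_univ _)
    intro x _ hx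
    have h3 : x ∉ L := fun h => hx (hL h)
    have h4 : x ∉ L' := fun h => hx (Finset.mem_sdiff.1 h).1
    simp [hq, h3, h4]
  · rw [hqsq, div_le_div_iff₀ hEpos hDpos]
    have h5 : Q * (b - 1) ≤ b := by nlinarith
    nlinarith
  · intro k1 k2
    have k1' : (2 : ℝ) ≤ s := by rw [hs]; exact_mod_cast k1
    have k2' : (2 : ℝ) ≤ s' := by rw [hs']; exact_mod_cast k2
    have hprod' : (b : ℝ) - 1 < s * s' := by nlinarith
    rw [hqsq, div_lt_div_iff₀ hEpos hDpos]
    have h5 : Q * (b - 1) < b := by nlinarith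
    nlinarith

/-- If all leaf distances are at most `2r+1` there is a central edge. -/
lemma exists_center {G : SimpleGraph V} (hG : G.IsTree) (r : ℕ)
    (hcard : 2 ≤ (leavesFinset G).card)
    (hd : ∀ i ∈ leavesFinset G, ∀ j ∈ leavesFinset G, G.dist i j ≤ 2 * r + 1) :
    ∃ c c', G.Adj c c' ∧ (∃ i ∈ leavesFinset G, G.dist i c' = G.dist i c + 1) ∧
      (∃ j ∈ leavesFinset G, G.dist j c = G.dist j c' + 1) ∧
      ∀ x ∈ leavesFinset G, (G.dist x c' = G.dist x c + 1 ∧ G.dist x c ≤ r) ∨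
        (G.dist x c = G.dist x c' + 1 ∧ G.dist x c' ≤ r) := by
  set B := leavesFinset G with hB
  obtain ⟨a, ha, a', ha', hne⟩ := Finset.one_lt_card.1 (show 1 < B.card by omega)
  obtain ⟨⟨i, j⟩, hij, hmax⟩ := Finset.exists_max_image (B ×ˢ B) (fun p => G.dist p.1 p.2)
    ⟨(a, a'), Finset.mk_mem_product ha ha'⟩
  rw [Finset.mem_product] at hij
  obtain ⟨hi, hj⟩ := hij
  simp only at hi hj
  have hmax' : ∀ x ∈ B, ∀ y ∈ B, G.dist x y ≤ G.dist i j := fun x hx y hy =>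
    hmax (x, y) (Finset.mk_mem_product hx hy)
  have hD1 : 1 ≤ G.dist i j :=
    le_trans (hG.connected.pos_dist_of_ne hne) (hmax' a ha a' ha')
  have hD2 := hd i hi j hj
  obtain ⟨w, hw⟩ := hG.connected.exists_walk_length_eq_dist i j
  obtain ⟨m, hm1, hm2, hm3⟩ : ∃ m, m ≤ r ∧ m + 1 ≤ G.dist i j ∧ G.dist i j ≤ m + 1 + r :=
    ⟨min r (G.dist i j - 1), by omega, by omega, by omega⟩
  have hc := getVert_dist hG w hw (m := m) (by omega)
  have hc' := getVert_dist hG w hw (m := m + 1) (by omega)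
  have hadj : G.Adj (w.getVert m) (w.getVert (m + 1)) := w.adj_getVert_succ (by omega)
  set c := w.getVert m with hcdef
  set c' := w.getVert (m + 1) with hcdef'
  have hic : G.dist i c' = G.dist i c + 1 := by omega
  have hjc : G.dist j c = G.dist j c' + 1 := by
    rw [dist_comm (u := j), dist_comm (u := j)]; omega
  refine ⟨c, c', hadj, ⟨i, hi, hic⟩, ⟨j, hj, hjc⟩, ?_⟩
  intro x hx
  rcases dist_step hG x hadj with h | h
  · right
    refine ⟨h.symm, ?_⟩
    have h1 := edge_sep hG hadj.symm x h.symm _ i rfl hic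
    have h2 := hmax' x hx i hi
    rw [dist_comm (u := c)] at h1
    omega
  · left
    refine ⟨h, ?_⟩
    have h1 := edge_sep hG hadj x h _ j rfl hjc
    have h2 := hmax' x hx j hj
    omega

lemma count_exact {G : SimpleGraph V} (hG : G.IsTree) (b r : ℕ) (hr : 1 ≤ r)
    (hcard : (leavesFinset G).card = b) (hV : Fintype.card V = b * r + 2) {c c' : V}
    (hcc : G.Adj c c')
    (hx : ∀ x ∈ leavesFinset G, (G.dist x c' = G.dist x c + 1 ∧ G.dist x c ≤ r) ∨
        (G.dist x c = G.dist x c' + 1 ∧ G.dist x c' ≤ r)) :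
    ∀ x ∈ leavesFinset G, (G.dist x c' = r + 1 ∧ G.dist x c = r) ∨
        (G.dist x c = r + 1 ∧ G.dist x c' = r) := by
  set B := leavesFinset G with hB
  have hcc1 : G.dist c c' = 1 := dist_eq_one_iff_adj.2 hcc
  have key : ∀ v x, v ≠ c → v ≠ c' → x ∈ B → G.dist c x = G.dist c v + G.dist v x →
      G.dist v x < min (G.dist x c) (G.dist x c') := by
    intro v x hvc hvc' hxB hg
    have h1 := hG.connected.pos_dist_of_ne hvc.symm
    rw [dist_comm (u := x) (v := c)]
    have hxx := hx x hxB
    rw [dist_comm (u := x) (v := c)] at hxx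
    rcases hxx with ⟨h2, h3⟩ | ⟨h2, h3⟩
    · omega
    · have h4 : G.dist c v ≠ 1 := by
        intro h5
        apply hvc'
        have h6 : G.dist c' x = G.dist x c' := dist_comm
        exact geo_unique hG c x (G.dist v x) v c' rfl (by omega) hg (by omega)
      omega
  choose! ℓ hℓ1 hℓ2 using fun v (hv : v ≠ c) => exists_leaf_below hG hv
  set A := (Finset.univ.erase c).erase c' with hA
  have hAcard : A.card = b * r := by
    rw [hA, Finset.card_erase_of_mem, Finset.card_erase_of_mem (Finset.mem_univ _),
      Finset.card_univ, hV]
    · omega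
    · exact Finset.mem_erase.2 ⟨hcc.ne.symm, Finset.mem_univ _⟩
  have hAmem : ∀ v ∈ A, v ≠ c ∧ v ≠ c' := by
    intro v hv
    rw [hA, Finset.mem_erase, Finset.mem_erase] at hv
    exact ⟨hv.2.1, hv.1⟩
  have hsurj := Finset.surjOn_of_injOn_of_card_le (s := A) (t := B ×ˢ Finset.range r)
    (fun v => (ℓ v, G.dist v (ℓ v))) ?_ ?_ ?_
  · intro x hxB
    obtain ⟨v, hvA, hv⟩ := hsurj (show (x, r - 1) ∈ ((B ×ˢ Finset.range r : Finset _) : Set _) by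
      rw [Finset.mem_coe, Finset.mem_product]
      exact ⟨hxB, Finset.mem_range.2 (by omega)⟩)
    obtain ⟨hvc, hvc'⟩ := hAmem v hvA
    simp only [Prod.mk.injEq] at hv
    have h1 := key v (ℓ v) hvc hvc' (hℓ1 v hvc) (hℓ2 v hvc)
    rw [hv.2, hv.1] at h1
    rcases hx x hxB with h | h <;> omega
  · intro v hvA
    obtain ⟨hvc, hvc'⟩ := hAmem v hvA
    have h1 := key v (ℓ v) hvc hvc' (hℓ1 v hvc) (hℓ2 v hvc)
    rw [Finset.mem_coe, Finset.mem_product]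
    refine ⟨hℓ1 v hvc, Finset.mem_range.2 ?_⟩
    simp only
    rcases hx _ (hℓ1 v hvc) with h | h <;> omega
  · intro u hu v hv huv
    simp only [Prod.mk.injEq] at huv
    have hu' := hℓ2 u (hAmem u hu).1
    have hv' := hℓ2 v (hAmem v hv).1
    rw [← huv.1] at hv' huv
    exact geo_unique hG c (ℓ u) _ u v rfl huv.2.symm hu' hv'
  · rw [Finset.card_product, Finset.card_range, hcard, hAcard]

lemma af_of_dist {G : SimpleGraph V} (hG : G.IsTree) (b r : ℕ) (hb : 3 ≤ b) (hr : 1 ≤ r)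
    (hcard : (leavesFinset G).card = b) (hV : Fintype.card V = b * r + 2) (c x0 : V)
    (hx0 : x0 ∈ leavesFinset G) (hd0 : G.dist x0 c = r + 1)
    (hd : ∀ x ∈ leavesFinset G, x ≠ x0 → G.dist x c = r) :
    Nonempty (G ≃g almostFork b r) := by
  have hb' : 0 < b := by omega
  -- enumerate the leaves
  obtain ⟨e, he⟩ : ∃ e : Fin b ≃ {x // x ∈ leavesFinset G}, e ⟨0, hb'⟩ = ⟨x0, hx0⟩ := by
    have e0 : Fin b ≃ {x // x ∈ leavesFinset G} :=
      Fintype.equivOfCardEq (by simp [hcard])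
    exact ⟨e0.trans (Equiv.swap (e0 ⟨0, hb'⟩) ⟨x0, hx0⟩), by simp⟩
  have hne : ∀ l : Fin b, (l : ℕ) ≠ 0 → (e l : V) ≠ x0 := by
    intro l hl h
    have : e l = e ⟨0, hb'⟩ := by rw [he]; exact Subtype.ext h
    have := e.injective this
    exact hl (by rw [this])
  have hdist : ∀ l : Fin b, G.dist c (e l) = if (l : ℕ) = 0 then r + 1 else r := by
    intro l
    rw [dist_comm]
    split_ifs with h
    · have : l = ⟨0, hb'⟩ := Fin.ext h
      rw [this, he]; exact hd0
    · exact hd _ (e l).2 (hne l h)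
  choose w hw using fun x => hG.connected.exists_walk_length_eq_dist c x
  let ψ : (Fin b × Fin r) ⊕ Bool → V
    | Sum.inr false => c
    | Sum.inr true => x0
    | Sum.inl (l, i) => (w (e l)).getVert (i + 1)
  have hle : ∀ l : Fin b, r ≤ G.dist c (e l) := by
    intro l; rw [hdist]; split_ifs <;> omega
  have hsurj : Function.Surjective ψ := by
    intro v
    by_cases hv : v = c
    · exact ⟨Sum.inr false, hv.symm⟩
    obtain ⟨x, hx, hg⟩ := exists_leaf_below hG hv
    obtain ⟨l, hl⟩ := e.surjective ⟨x, hx⟩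
    have hlx : (e l : V) = x := by rw [hl]
    have h1 := hG.connected.pos_dist_of_ne (Ne.symm hv)
    have hdl := hdist l
    rw [hlx] at hdl
    by_cases hvr : G.dist c v ≤ r
    · refine ⟨Sum.inl (l, ⟨G.dist c v - 1, by omega⟩), ?_⟩
      simp only [ψ]
      rw [hlx, Nat.sub_add_cancel h1]
      have h2 := getVert_dist hG (w x) (hw x) (m := G.dist c v) (by omega)
      exact geo_unique hG c x (G.dist v x) _ v (by omega) rfl (by omega) hg
    · refine ⟨Sum.inr true, ?_⟩
      simp only [ψ]
      have hl0 : (l : ℕ) = 0 := by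
        by_contra h
        rw [if_neg h] at hdl
        omega
      rw [if_pos hl0] at hdl
      have hvx : G.dist v x = 0 := by omega
      rw [hG.connected.dist_eq_zero_iff] at hvx
      have : l = ⟨0, hb'⟩ := Fin.ext hl0
      rw [this, he] at hlx
      exact hlx.trans hvx.symm
  have hbij : Function.Bijective ψ := by
    rw [Fintype.bijective_iff_surjective_and_card]
    refine ⟨hsurj, ?_⟩
    rw [hV]; simp
  have hpar : ∀ u, u ≠ Sum.inr false → G.Adj (ψ (afP b r hb' hr u)) (ψ u) := by
    intro u hu
    rcases u with ⟨l, i⟩ | (_ | _)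
    · have hl := hle l
      have hadj : G.Adj ((w (e l)).getVert i) ((w (e l)).getVert (i + 1)) :=
        (w (e l)).adj_getVert_succ (by rw [hw]; omega)
      simp only [afP]
      split_ifs with h
      · rw [h] at hadj
        simp only [Walk.getVert_zero] at hadj
        simp only [ψ, h]
        exact hadj
      · simp only [ψ]
        rw [Nat.sub_add_cancel (by omega)]
        exact hadj
    · exact absurd rfl hu
    · have hlen : (w x0).length = r + 1 := by rw [hw, dist_comm]; exact hd0
      have hadj : G.Adj ((w x0).getVert r) ((w x0).getVert (r + 1)) :=
        (w x0).adj_getVert_succ (by omega)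
      rw [← hlen, Walk.getVert_length] at hadj
      simp only [afP, ψ]
      rw [he, Nat.sub_add_cancel hr]
      exact hadj
  have hhom : ∀ u v, (almostFork b r).Adj u v → G.Adj (ψ u) (ψ v) := by
    intro u v h
    rcases (af_adj b r hb' hr u v).1 h with ⟨h1, rfl⟩ | ⟨h1, rfl⟩
    · exact (hpar u h1).symm
    · exact hpar v h1
  let eψ : ((Fin b × Fin r) ⊕ Bool) ≃ V := Equiv.ofBijective ψ hbij
  have hmapconn : ((almostFork b r).map eψ.toEmbedding).Connected :=
    (Iso.connected_iff (Iso.map eψ (almostFork b r))).1 (af_tree b r hb' hr).connected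
  have hmaple : (almostFork b r).map eψ.toEmbedding ≤ G := by
    intro x y h
    rw [map_adj] at h
    obtain ⟨u, v, huv, rfl, rfl⟩ := h
    exact hhom u v huv
  have hGle : G ≤ (almostFork b r).map eψ.toEmbedding :=
    (isTree_iff_minimal_connected.1 hG).2 hmapconn hmaple
  have hEq : (almostFork b r).map eψ.toEmbedding = G := le_antisymm hmaple hGle
  rw [← hEq]
  exact ⟨(Iso.map eψ (almostFork b r)).symm⟩

/-- The upper bound, with the rigidity statement. -/
lemma upper {G : SimpleGraph V} (hG : G.IsTree) (b r : ℕ) (hb : 3 ≤ b) (hr : 1 ≤ r)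
    (hcard : (leavesFinset G).card = b) (hV : Fintype.card V = b * r + 2) :
    ∃ t ∈ eigSet G (leavesFinset G), t ≤ (b : ℝ) / ((b : ℝ) * ((r : ℝ) + 1) - 1) ∧
      (t < (b : ℝ) / ((b : ℝ) * ((r : ℝ) + 1) - 1) ∨ Nonempty (G ≃g almostFork b r)) := by
  by_cases hfar : ∃ i ∈ leavesFinset G, ∃ j ∈ leavesFinset G, 2 * r + 2 ≤ G.dist i j
  · obtain ⟨i, hi, j, hj, hd⟩ := hfar
    obtain ⟨t, ht, hlt⟩ := far_case hG b r hb hi hj hd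
    exact ⟨t, ht, hlt.le, Or.inl hlt⟩
  push Not at hfar
  obtain ⟨c, c', hcc, ⟨i, hi, hic⟩, ⟨j, hj, hjc⟩, hx⟩ := exists_center hG r (by omega)
    (fun i hi j hj => Nat.lt_succ_iff.1 (hfar i hi j hj))
  have hex := count_exact hG b r hr hcard hV hcc hx
  have tri : ∀ a b d, G.dist a d ≤ G.dist a b + G.dist b d := fun a b d =>
    hG.connected.dist_triangle
  set B := leavesFinset G with hB
  set L := B.filter (fun x => G.dist x c = r) with hL
  have hLmem : ∀ x ∈ L, x ∈ B ∧ G.dist x c = r ∧ G.dist x c' = r + 1 := by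
    intro x hx
    rw [hL, Finset.mem_filter] at hx
    rcases hex x hx.1 with h | h
    · exact ⟨hx.1, hx.2, h.1⟩
    · omega
  have hLmem' : ∀ x ∈ B \ L, x ∈ B ∧ G.dist x c' = r ∧ G.dist x c = r + 1 := by
    intro x hx
    rw [hL, Finset.mem_sdiff, Finset.mem_filter] at hx
    rcases hex x hx.1 with h | h
    · exact absurd ⟨hx.1, h.2⟩ hx.2
    · exact ⟨hx.1, h.2, h.1⟩
  have hiL : i ∈ L := by
    rw [hL, Finset.mem_filter]
    refine ⟨hi, ?_⟩
    rcases hex i hi with h | h <;> omega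
  have hjL : j ∈ B \ L := by
    rw [hL, Finset.mem_sdiff, Finset.mem_filter]
    refine ⟨hj, ?_⟩
    rcases hex j hj with h | h <;> omega
  have c1 : 1 ≤ L.card := Finset.card_pos.2 ⟨i, hiL⟩
  have c2 : 1 ≤ (B \ L).card := Finset.card_pos.2 ⟨j, hjL⟩
  obtain ⟨t, ht, hle, hlt⟩ := two_sided hG b r hb hcard L (Finset.filter_subset _ _) c1 c2
    (by
      intro x hx y hy
      have h1 := hLmem x hx
      have h2 := hLmem y hy
      have h3 := tri y c x
      rw [dist_comm (u := c)] at h3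
      omega)
    (by
      intro x hx y hy
      have h1 := hLmem' x hx
      have h2 := hLmem' y hy
      have h3 := tri y c' x
      rw [dist_comm (u := c')] at h3
      omega)
    (by
      intro x hx y hy
      have h1 := hLmem x hx
      have h2 := hLmem' y hy
      have h3 := edge_sep hG hcc x (by omega) _ y rfl (by omega)
      rw [dist_comm (u := c')] at h3
      omega)
  refine ⟨t, ht, hle, ?_⟩
  by_cases k1 : 2 ≤ L.card
  · by_cases k2 : 2 ≤ (B \ L).card
    · exact Or.inl (hlt k1 k2)
    · right
      have hone : (B \ L).card ≤ 1 := by omega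
      refine af_of_dist hG b r hb hr hcard hV c j hj ((hLmem' j hjL).2.2) ?_
      intro x hx hxj
      by_cases hxL : x ∈ L
      · exact (hLmem x hxL).2.1
      · exact absurd (Finset.card_le_one.1 hone x (Finset.mem_sdiff.2 ⟨hx, hxL⟩) j hjL) hxj
  · right
    have hone : L.card ≤ 1 := by omega
    refine af_of_dist hG b r hb hr hcard hV c' i hi ((hLmem i hiL).2.2) ?_
    intro x hx hxi
    by_cases hxL : x ∈ L
    · exact absurd (Finset.card_le_one.1 hone x hxL i hiL) hxi
    · exact (hLmem' x (Finset.mem_sdiff.2 ⟨hx, hxL⟩)).2.1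

end SteklovAF

/-- Let `b ≥ 3` and `r ≥ 1` be integers and set `n = b*r + 2`. Then
`σ_{2,max}(b,n) = b/(b(r+1)-1) = 1/(r + 1 - 1/b)`, and the unique tree (up to isomorphism)
with `b` leaves and `n` vertices attaining this maximum is the almost fork graph `AF(b,r)`. -/
theorem stmt2 (b r : ℕ) (hb : 3 ≤ b) (hr : 1 ≤ r) (n : ℕ) (hn : n = b * r + 2) :
    sigmaMax 2 b n = (b : ℝ) / ((b : ℝ) * ((r : ℝ) + 1) - 1) ∧
    sigmaMax 2 b n = 1 / ((r : ℝ) + 1 - 1 / (b : ℝ)) ∧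
    ∀ G : SimpleGraph (Fin n), G.IsTree → (leavesFinset G).card = b →
      (steklovEig G (leavesFinset G) 2 = sigmaMax 2 b n ↔
        Nonempty (G ≃g almostFork b r)) := by
  have hb' : 0 < b := by omega
  set T : ℝ := (b : ℝ) / ((b : ℝ) * ((r : ℝ) + 1) - 1) with hT
  have hupper : ∀ G : SimpleGraph (Fin n), G.IsTree → (leavesFinset G).card = b →
      steklovEig G (leavesFinset G) 2 ≤ T := by
    intro G hG hc
    obtain ⟨t, ht, hle, _⟩ := SteklovAF.upper hG b r hb hr hc (by simp [hn])
    exact (SteklovAF.steklov_le ht).trans hle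
  have hiso : ∀ G : SimpleGraph (Fin n), G.IsTree → (leavesFinset G).card = b →
      Nonempty (G ≃g almostFork b r) → steklovEig G (leavesFinset G) 2 = T := by
    rintro G hG hc ⟨φ⟩
    refine le_antisymm (hupper G hG hc) ?_
    obtain ⟨t, ht, _⟩ := SteklovAF.upper hG b r hb hr hc (by simp [hn])
    exact SteklovAF.le_steklov ⟨t, ht⟩ (fun f hf => SteklovAF.iso_energy b r hb hr φ f hf)
  have hrigid : ∀ G : SimpleGraph (Fin n), G.IsTree → (leavesFinset G).card = b →
      steklovEig G (leavesFinset G) 2 = T → Nonempty (G ≃g almostFork b r) := by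
    intro G hG hc hs
    obtain ⟨t, ht, _, hlt | h⟩ := SteklovAF.upper hG b r hb hr hc (by simp [hn])
    · have := SteklovAF.steklov_le ht
      linarith
    · exact h
  have hmax : sigmaMax 2 b n = T := by
    have hcardAF : Fintype.card ((Fin b × Fin r) ⊕ Bool) = Fintype.card (Fin n) := by
      simp [hn]
    let e := Fintype.equivOfCardEq hcardAF
    let φ := SimpleGraph.Iso.map e (almostFork b r)
    have hG0 : ((almostFork b r).map e).IsTree :=
      φ.isTree_iff.1 (SteklovAF.af_tree b r hb' hr)
    have hc0 : (leavesFinset ((almostFork b r).map e)).card = b := by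
      rw [SteklovAF.leaves_iso φ, Finset.card_map, SteklovAF.af_leaves b r hb hr,
        Finset.card_image_of_injective _ (SteklovAF.afTip_inj b r hr)]
      simp
    have hmem : T ∈ { s : ℝ | ∃ G : SimpleGraph (Fin n), G.IsTree ∧ (leavesFinset G).card = b ∧
        s = steklovEig G (leavesFinset G) 2 } :=
      ⟨_, hG0, hc0, (hiso _ hG0 hc0 ⟨φ.symm⟩).symm⟩
    have hub : ∀ s ∈ { s : ℝ | ∃ G : SimpleGraph (Fin n), G.IsTree ∧ (leavesFinset G).card = b ∧
        s = steklovEig G (leavesFinset G) 2 }, s ≤ T := by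
      rintro s ⟨G, hG, hc, rfl⟩
      exact hupper G hG hc
    exact le_antisymm (csSup_le ⟨T, hmem⟩ hub) (le_csSup ⟨T, hub⟩ hmem)
  refine ⟨hmax, ?_, ?_⟩
  · rw [hmax, hT]
    have hbR : (b : ℝ) ≠ 0 := by exact_mod_cast hb'.ne'
    have h1 : (r : ℝ) + 1 - 1 / (b : ℝ) = ((b : ℝ) * ((r : ℝ) + 1) - 1) / b := by
      field_simp
    rw [h1, one_div_div]
  · intro G hG hc
    rw [hmax]
    exact ⟨hrigid G hG hc, hiso G hG hc⟩
end

section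
/- Let b ≥ 3 and n ≥ b+1 be integers and let k be an integer with 3 ≤ k ≤ b. Then σ_{k,max}(b,n) = 1. -/
open scoped BigOperators
open Classical

theorem energy_term_nonneg {V : Type*} (G : SimpleGraph V) (f : V → ℝ) (x y : V) :
    0 ≤ (if G.Adj x y then (f x - f y) ^ 2 else 0) := by
  split_ifs <;> positivity

theorem energy_nonneg {V : Type*} [Fintype V] (G : SimpleGraph V) (f : V → ℝ) :
    0 ≤ dirichletEnergy G f := by
  unfold dirichletEnergy
  have := Finset.sum_nonneg (s := Finset.univ) (fun x _ =>
    Finset.sum_nonneg (s := Finset.univ) (fun y _ => energy_term_nonneg G f x y))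
  linarith

theorem energy_zero_adj {V : Type*} [Fintype V] (G : SimpleGraph V) (f : V → ℝ)
    (h : dirichletEnergy G f ≤ 0) {x y : V} (hxy : G.Adj x y) : f x = f y := by
  have h1 := fun x : V => Finset.sum_nonneg (s := Finset.univ)
    (fun y _ => energy_term_nonneg G f x y)
  have h0 : (∑ x : V, ∑ y : V, if G.Adj x y then (f x - f y) ^ 2 else 0) = 0 := by
    have := Finset.sum_nonneg (s := Finset.univ) (fun x _ => h1 x)
    unfold dirichletEnergy at h
    linarith
  rw [Finset.sum_eq_zero_iff_of_nonneg (fun x _ => h1 x)] at h0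
  have h2 := h0 x (Finset.mem_univ x)
  rw [Finset.sum_eq_zero_iff_of_nonneg (fun y _ => energy_term_nonneg G f x y)] at h2
  have h3 := h2 y (Finset.mem_univ y)
  rw [if_pos hxy] at h3
  have := pow_eq_zero_iff (two_ne_zero) |>.1 h3
  linarith

theorem energy_zero_const {V : Type*} [Fintype V] (G : SimpleGraph V) (hG : G.Connected)
    (f : V → ℝ) (h : dirichletEnergy G f ≤ 0) (x y : V) : f x = f y := by
  obtain ⟨p⟩ := hG.preconnected x y
  induction p with
  | nil => rfl
  | cons hadj _ ih => exact (energy_zero_adj G f h hadj).trans ih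

theorem energy_lower {V : Type*} [Fintype V] (G : SimpleGraph V) (B : Finset V) (c e : V)
    (hc : c ∉ B) (hB : ∀ x ∈ B, x ≠ e → G.Adj x c) (f : V → ℝ) (hfc : f c = 0) (hfe : f e = 0) :
    ∑ x ∈ B, f x ^ 2 ≤ dirichletEnergy G f := by
  set h : V → ℝ := fun x => if x ∈ B then f x ^ 2 else 0 with hh
  have hhc : h c = 0 := by simp [hh, hc]
  have key : ∑ x : V, ∑ y : V, ((if y = c then h x else 0) + (if x = c then h y else 0))
      ≤ ∑ x : V, ∑ y : V, if G.Adj x y then (f x - f y) ^ 2 else 0 := by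
    refine Finset.sum_le_sum fun x _ => Finset.sum_le_sum fun y _ => ?_
    have hn := energy_term_nonneg G f x y
    by_cases hy : y = c
    · by_cases hx : x = c
      · subst hx; subst hy; simp [hhc]
      · subst hy
        simp only [if_true, if_neg hx, add_zero]
        by_cases hxB : x ∈ B
        · by_cases hxe : x = e
          · simp only [hh, if_pos hxB]; rw [hxe] at hn ⊢; simpa [hfe] using hn
          · simp [hh, hxB, hB x hxB hxe, hfc]
        · simp only [hh, if_neg hxB]; exact hn
    · by_cases hx : x = c
      · subst hx
        simp only [if_true, if_neg hy, zero_add]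
        by_cases hxB : y ∈ B
        · by_cases hxe : y = e
          · simp only [hh, if_pos hxB]; rw [hxe] at hn ⊢; simpa [hfe] using hn
          · simp [hh, hxB, (hB y hxB hxe).symm, hfc]
        · simp only [hh, if_neg hxB]; exact hn
      · simpa [hx, hy] using hn
  have e1 : ∑ x : V, ∑ y : V, ((if y = c then h x else 0) + (if x = c then h y else 0))
      = 2 * ∑ x : V, h x := by
    simp only [Finset.sum_add_distrib]
    rw [Finset.sum_comm (f := fun x y => if x = c then h y else 0)]
    simp
    ring
  have e2 : ∑ x : V, h x = ∑ x ∈ B, f x ^ 2 := by simp [hh]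
  unfold dirichletEnergy
  rw [e1, e2] at key
  linarith

theorem exists_vanish {V : Type*} [Fintype V] (F : Submodule ℝ (V → ℝ))
    (hF : 3 ≤ Module.finrank ℝ F) (c e : V) : ∃ f ∈ F, f ≠ 0 ∧ f c = 0 ∧ f e = 0 := by
  let φ : F →ₗ[ℝ] ℝ × ℝ :=
    ((LinearMap.proj c : (V → ℝ) →ₗ[ℝ] ℝ).prod (LinearMap.proj e)).comp F.subtype
  have hk : LinearMap.ker φ ≠ ⊥ := by
    apply LinearMap.ker_ne_bot_of_finrank_lt
    simp
    omega
  obtain ⟨f, hf, hf0⟩ := (Submodule.ne_bot_iff _).1 hk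
  have : φ f = 0 := hf
  have h1 : (φ f).1 = 0 := by rw [this]; rfl
  have h2 : (φ f).2 = 0 := by rw [this]; rfl
  exact ⟨f, f.2, by simpa using hf0, h1, h2⟩

theorem steklov_mem_ge {V : Type*} [Fintype V] (G : SimpleGraph V) (hG : G.Connected)
    (B : Finset V) (c e : V)
    (hc : c ∉ B) (hB : ∀ x ∈ B, x ≠ e → G.Adj x c) (k : ℕ) (hk : 3 ≤ k) (t : ℝ)
    (ht : ∃ F : Submodule ℝ (V → ℝ),
    Module.finrank ℝ (F.map (LinearMap.funLeft ℝ ℝ (fun x : {v // v ∈ B} => (x : V)))) = k ∧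
    ∀ f ∈ F, dirichletEnergy G f ≤ t * ∑ x ∈ B, (f x) ^ 2) : 1 ≤ t := by
  obtain ⟨F, hF, hE⟩ := ht
  have h3 : 3 ≤ Module.finrank ℝ F := by
    have := Submodule.finrank_map_le
      (LinearMap.funLeft ℝ ℝ (fun x : {v // v ∈ B} => (x : V))) F
    omega
  obtain ⟨f, hfF, hf0, hfc, hfe⟩ := exists_vanish F h3 c e
  have h1 := energy_lower G B c e hc hB f hfc hfe
  have h2 := hE f hfF
  have hnn : 0 ≤ ∑ x ∈ B, f x ^ 2 := Finset.sum_nonneg fun x _ => sq_nonneg _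
  rcases hnn.eq_or_lt with h | h
  · rw [← h, mul_zero] at h2
    exact absurd (funext fun x => (energy_zero_const G hG f h2 x c).trans hfc) hf0
  · nlinarith

theorem steklov_bddBelow {V : Type*} [Fintype V] (G : SimpleGraph V) (B : Finset V) (k : ℕ)
    (hk : 1 ≤ k) (t : ℝ)
    (ht : ∃ F : Submodule ℝ (V → ℝ),
    Module.finrank ℝ (F.map (LinearMap.funLeft ℝ ℝ (fun x : {v // v ∈ B} => (x : V)))) = k ∧
    ∀ f ∈ F, dirichletEnergy G f ≤ t * ∑ x ∈ B, (f x) ^ 2) : 0 ≤ t := by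
  obtain ⟨F, hF, hE⟩ := ht
  have hne : F.map (LinearMap.funLeft ℝ ℝ (fun x : {v // v ∈ B} => (x : V))) ≠ ⊥ := by
    intro h
    rw [h, finrank_bot] at hF
    omega
  obtain ⟨g, hg, hg0⟩ := (Submodule.ne_bot_iff _).1 hne
  obtain ⟨f, hf, rfl⟩ := hg
  have h1 := energy_nonneg G f
  have h2 := hE f hf
  have hpos : 0 < ∑ x ∈ B, f x ^ 2 := by
    obtain ⟨x, hx⟩ := Function.ne_iff.1 hg0
    refine Finset.sum_pos' (fun x _ => sq_nonneg _) ⟨x, x.2, ?_⟩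
    have : f x ≠ 0 := by simpa [LinearMap.funLeft_apply] using hx
    positivity
  by_contra hneg
  push Not at hneg
  nlinarith

theorem leaf_mem {V : Type*} [Fintype V] (G : SimpleGraph V) (v : V) :
    v ∈ leavesFinset G ↔ ∃! w, G.Adj v w := by
  unfold leavesFinset
  rw [Finset.mem_filter, SimpleGraph.degree_eq_one_iff_existsUnique_adj]
  simp

theorem leaves_not_adj {V : Type*} [Fintype V] (G : SimpleGraph V) (hG : G.Connected)
    (hV : 3 ≤ Fintype.card V) (u v : V) (hu : u ∈ leavesFinset G) (hv : v ∈ leavesFinset G) :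
    ¬ G.Adj u v := by
  intro huv
  obtain ⟨a, ha, hau⟩ := (leaf_mem G u).1 hu
  obtain ⟨a', ha', hav⟩ := (leaf_mem G v).1 hv
  obtain ⟨w, hw⟩ : ∃ w, w ∉ ({u, v} : Finset V) := by
    by_contra! h
    have : Finset.univ ⊆ ({u, v} : Finset V) := fun w _ => h w
    have h1 := Finset.card_le_card this
    have h2 := Finset.card_le_two (a := u) (b := v)
    rw [Finset.card_univ] at h1
    omega
  obtain ⟨p⟩ := hG.preconnected u w
  obtain ⟨d, -, hd1, hd2⟩ := p.exists_boundary_dart {u, v} (by simp) (by simpa using hw)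
  have hadj := d.adj
  simp only [Set.mem_insert_iff, Set.mem_singleton_iff, not_or] at hd1 hd2
  rcases hd1 with h | h
  · rw [h] at hadj
    exact hd2.2 ((hau _ hadj).trans (hau _ huv).symm)
  · rw [h] at hadj
    exact hd2.1 ((hav _ hadj).trans (hav _ huv.symm).symm)

theorem energy_leaves {V : Type*} [Fintype V] (G : SimpleGraph V) (hG : G.Connected)
    (hV : 3 ≤ Fintype.card V) (f : V → ℝ) (hf : ∀ x, x ∉ leavesFinset G → f x = 0) :
    dirichletEnergy G f = ∑ x ∈ leavesFinset G, f x ^ 2 := by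
  have e1 : ∀ x y : V, (if G.Adj x y then (f x - f y) ^ 2 else 0)
      = (if G.Adj x y then f x ^ 2 else 0) + (if G.Adj y x then f y ^ 2 else 0) := by
    intro x y
    by_cases h : G.Adj x y
    · simp only [if_pos h, if_pos h.symm]
      have : f x * f y = 0 := by
        by_cases hx : x ∈ leavesFinset G
        · rw [hf y fun hy => leaves_not_adj G hG hV x y hx hy h, mul_zero]
        · rw [hf x hx, zero_mul]
      linear_combination (-2) * this
    · have h' : ¬ G.Adj y x := fun h' => h h'.symm
      simp [h, h']
  have e2 : ∑ x : V, ∑ y : V, (if G.Adj x y then f x ^ 2 else 0)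
      = ∑ x ∈ leavesFinset G, f x ^ 2 := by
    rw [← Finset.sum_subset (Finset.subset_univ (leavesFinset G))]
    · refine Finset.sum_congr rfl fun x hx => ?_
      obtain ⟨a, ha, hau⟩ := (leaf_mem G x).1 hx
      rw [Finset.sum_eq_single a]
      · simp only [if_pos ha]
      · intro y _ hy
        exact if_neg fun h => hy (hau y h)
      · simp
    · intro x _ hx
      simp [hf x hx]
  unfold dirichletEnergy
  simp only [e1, Finset.sum_add_distrib]
  rw [Finset.sum_comm (f := fun x y => if G.Adj y x then f y ^ 2 else 0), e2]
  ring

theorem one_mem {V : Type*} [Fintype V] (G : SimpleGraph V) (hG : G.Connected)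
    (hV : 3 ≤ Fintype.card V) (k : ℕ) (hk : k ≤ (leavesFinset G).card) :
    ∃ F : Submodule ℝ (V → ℝ),
    Module.finrank ℝ (F.map (LinearMap.funLeft ℝ ℝ
      (fun x : {v // v ∈ leavesFinset G} => (x : V)))) = k ∧
    ∀ f ∈ F, dirichletEnergy G f ≤ 1 * ∑ x ∈ leavesFinset G, (f x) ^ 2 := by
  set B := leavesFinset G with hB
  obtain ⟨W, hW⟩ : ∃ W : Submodule ℝ ({v // v ∈ B} → ℝ), Module.finrank ℝ W = k := by
    let bs := Module.finBasis ℝ ({v // v ∈ B} → ℝ)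
    have hk' : k ≤ Module.finrank ℝ ({v // v ∈ B} → ℝ) := by simpa using hk
    refine ⟨Submodule.span ℝ (Set.range (bs ∘ Fin.castLE hk')), ?_⟩
    rw [finrank_span_eq_card (bs.linearIndependent.comp _ (Fin.castLE_injective hk'))]
    simp
  refine ⟨W.map (Function.ExtendByZero.linearMap ℝ (fun x : {v // v ∈ B} => (x : V))), ?_, ?_⟩
  · rw [← Submodule.map_comp]
    have : (LinearMap.funLeft ℝ ℝ (fun x : {v // v ∈ B} => (x : V))).comp
        (Function.ExtendByZero.linearMap ℝ (fun x : {v // v ∈ B} => (x : V)))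
        = LinearMap.id := by
      ext g x
      simp [LinearMap.funLeft_apply, Subtype.val_injective.extend_apply]
    rw [this, Submodule.map_id, hW]
  · rintro f ⟨g, -, rfl⟩
    rw [one_mul]
    refine (energy_leaves G hG hV _ fun x hx => ?_).le
    simp only [Function.ExtendByZero.linearMap_apply]
    rw [Function.extend_apply']
    · rfl
    · rintro ⟨a, rfl⟩
      exact hx a.2

/-- parent function of the broom, `m = n - b` the end of the handle. -/
def bpar (m i : ℕ) : ℕ := if i ≤ m then i - 1 else 0

def broom (n m : ℕ) : SimpleGraph (Fin n) where
  Adj i j := (i.1 ≠ 0 ∧ bpar m i.1 = j.1) ∨ (j.1 ≠ 0 ∧ bpar m j.1 = i.1)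
  symm := ⟨fun i j h => h.symm⟩
  loopless := ⟨fun i h => by
    unfold bpar at h
    split_ifs at h <;> omega⟩

theorem bpar_lt (m i : ℕ) (hi : i ≠ 0) : bpar m i < i := by
  unfold bpar; split_ifs <;> omega

theorem broom_connected (n m : ℕ) (hn : 0 < n) : (broom n m).Connected := by
  have key : ∀ i : ℕ, ∀ hi : i < n, (broom n m).Reachable ⟨i, hi⟩ ⟨0, hn⟩ := by
    intro i
    induction i using Nat.strong_induction_on with
    | _ i ih =>
      intro hi
      by_cases h0 : i = 0
      · subst h0; rfl
      · have hlt := bpar_lt m i h0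
        have hadj : (broom n m).Adj ⟨i, hi⟩ ⟨bpar m i, hlt.trans hi⟩ := Or.inl ⟨h0, rfl⟩
        exact hadj.reachable.trans (ih _ hlt _)
  haveI : Nonempty (Fin n) := ⟨⟨0, hn⟩⟩
  exact ⟨fun x y => (key x.1 x.2).trans (key y.1 y.2).symm⟩

theorem broom_isTree (n m : ℕ) (hn : 0 < n) : (broom n m).IsTree := by
  rw [SimpleGraph.isTree_iff_connected_and_card]
  have hc := broom_connected n m hn
  refine ⟨hc, le_antisymm ?_ hc.card_vert_le_card_edgeSet_add_one⟩
  let z : Fin n := ⟨0, hn⟩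
  let φ : Fin n → Sym2 (Fin n) := fun i =>
    s(i, ⟨bpar m i.1, by
      by_cases h : i.1 = 0
      · rw [h]; unfold bpar; split_ifs <;> omega
      · exact (bpar_lt m i.1 h).trans i.2⟩)
  have hsub : (broom n m).edgeSet ⊆ ((Finset.univ.erase z).image φ : Finset (Sym2 (Fin n))) := by
    intro s
    induction s using Sym2.ind with
    | _ x y =>
      intro h
      rw [SimpleGraph.mem_edgeSet] at h
      simp only [Finset.coe_image, Set.mem_image, Finset.mem_coe, Finset.mem_erase]
      rcases h with h | h
      · refine ⟨x, ⟨fun hx => h.1 (by rw [hx]), Finset.mem_univ _⟩, ?_⟩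
        simp only [φ, h.2]
      · refine ⟨y, ⟨fun hx => h.1 (by rw [hx]), Finset.mem_univ _⟩, ?_⟩
        simp only [φ, h.2]
        exact Sym2.eq_swap
  have h1 : Nat.card (broom n m).edgeSet ≤ n - 1 := by
    calc Nat.card (broom n m).edgeSet = (broom n m).edgeSet.ncard := rfl
      _ ≤ (((Finset.univ.erase z).image φ : Finset (Sym2 (Fin n))) : Set (Sym2 (Fin n))).ncard :=
          Set.ncard_le_ncard hsub (Finset.finite_toSet _)
      _ = ((Finset.univ.erase z).image φ).card := Set.ncard_coe_finset _
      _ ≤ (Finset.univ.erase z).card := Finset.card_image_le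
      _ = n - 1 := by simp
  rw [Nat.card_fin]
  omega

theorem broom_leaf (n m : ℕ) (hm : 1 ≤ m) (hn : m + 3 ≤ n) (x : Fin n) :
    x ∈ leavesFinset (broom n m) ↔ m ≤ x.1 := by
  rw [leaf_mem]
  constructor
  · rintro ⟨a, -, hau⟩
    by_contra! hx
    by_cases h0 : x.1 = 0
    · have h1 := hau ⟨m + 1, by omega⟩ (Or.inr ⟨by simp, by unfold bpar; simp [h0]⟩)
      have h2 := hau ⟨m + 2, by omega⟩ (Or.inr ⟨by simp, by unfold bpar; simp [h0]⟩)
      have := congrArg Fin.val (h1.trans h2.symm)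
      simp at this
    · have h1 := hau ⟨x.1 - 1, by omega⟩ (Or.inl ⟨h0, by unfold bpar; simp [hx.le]⟩)
      have h2 := hau ⟨x.1 + 1, by omega⟩ (Or.inr ⟨by simp, by
        have : x.1 + 1 ≤ m := hx
        unfold bpar; simp [this]⟩)
      have := congrArg Fin.val (h1.trans h2.symm)
      simp at this
  · intro hx
    have h0 : x.1 ≠ 0 := by omega
    refine ⟨⟨bpar m x.1, (bpar_lt m x.1 h0).trans x.2⟩, Or.inl ⟨h0, rfl⟩, ?_⟩
    rintro y (⟨-, h⟩ | ⟨hy, h⟩)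
    · exact Fin.ext h.symm
    · exfalso
      unfold bpar at h
      split_ifs at h <;> omega

theorem broom_card (n m : ℕ) (hm : 1 ≤ m) (hn : m + 3 ≤ n) :
    (leavesFinset (broom n m)).card = n - m := by
  have : leavesFinset (broom n m) = Finset.Ici (⟨m, by omega⟩ : Fin n) := by
    ext x
    rw [broom_leaf n m hm hn, Finset.mem_Ici, Fin.le_def]
  rw [this, Fin.card_Ici]

/-- Let `b ≥ 3` and `n ≥ b + 1` be integers and let `k` be an integer with
`3 ≤ k ≤ b`. Then `σ_{k,max}(b,n) = 1`. -/
theorem stmt5 (b n k : ℕ) (hb : 3 ≤ b) (hn : b + 1 ≤ n) (hk1 : 3 ≤ k) (hk2 : k ≤ b) :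
    sigmaMax k b n = 1 := by
  have hV : 3 ≤ Fintype.card (Fin n) := by rw [Fintype.card_fin]; omega
  have hup : ∀ G : SimpleGraph (Fin n), G.IsTree → (leavesFinset G).card = b →
      steklovEig G (leavesFinset G) k ≤ 1 := by
    intro G hG hc
    exact csInf_le ⟨0, fun t ht => steklov_bddBelow G _ k (by omega) t ht⟩
      (one_mem G hG.connected hV k (by omega))
  have hm : 1 ≤ n - b := by omega
  have hmn : (n - b) + 3 ≤ n := by omega
  have hT := broom_isTree n (n - b) (by omega)
  have hcard : (leavesFinset (broom n (n - b))).card = b := by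
    rw [broom_card n _ hm hmn]; omega
  have hlow : 1 ≤ steklovEig (broom n (n - b)) (leavesFinset (broom n (n - b))) k := by
    refine le_csInf ⟨1, one_mem _ hT.connected hV k (by omega)⟩ fun t ht => ?_
    refine steklov_mem_ge _ hT.connected _ ⟨0, by omega⟩ ⟨n - b, by omega⟩ ?_ ?_ k hk1 t ht
    · rw [broom_leaf n _ hm hmn]; simp; omega
    · intro x hx hxe
      rw [broom_leaf n _ hm hmn] at hx
      have hne : x.1 ≠ n - b := fun h => hxe (Fin.ext h)
      refine Or.inl ⟨by omega, ?_⟩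
      unfold bpar
      rw [if_neg (by omega)]
  have hmem : (1 : ℝ) ∈ { s : ℝ | ∃ G : SimpleGraph (Fin n), G.IsTree ∧
      (leavesFinset G).card = b ∧ s = steklovEig G (leavesFinset G) k } :=
    ⟨_, hT, hcard, le_antisymm hlow (hup _ hT hcard)⟩
  have hgr : IsGreatest { s : ℝ | ∃ G : SimpleGraph (Fin n), G.IsTree ∧
      (leavesFinset G).card = b ∧ s = steklovEig G (leavesFinset G) k } 1 := by
    refine ⟨hmem, ?_⟩
    rintro s ⟨G, hG, hc, rfl⟩
    exact hup G hG hc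
  exact hgr.csSup_eq
end

section
/- Let n ≥ 4 be an integer. Then σ̃_{2,max}(3,n) = (n−2)/(2n−5), and this maximum is attained by the barbell graph B(1, n−3, 3). -/
open scoped BigOperators
open Classical

/-- The barbell graph `B(p,q,D)`: a path with `D-1` vertices (`Sum.inr (Sum.inr w)`),
with `p` pendant vertices attached at the endpoint `w = 0` and `q` pendant vertices
attached at the endpoint `w = D-2`. -/
def barbell (p q D : ℕ) : SimpleGraph (Fin p ⊕ Fin q ⊕ Fin (D - 1)) :=
  SimpleGraph.fromRel fun x y =>
    match x, y with
    | Sum.inl _, Sum.inr (Sum.inr w) => (w : ℕ) = 0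
    | Sum.inr (Sum.inl _), Sum.inr (Sum.inr w) => (w : ℕ) = D - 2
    | Sum.inr (Sum.inr w), Sum.inr (Sum.inr w') => (w' : ℕ) = (w : ℕ) + 1
    | _, _ => False

structure IsDS {V : Type*} (G : SimpleGraph V) (a b : V) (P Q : Finset V) : Prop where
  ab : a ≠ b
  cover : ∀ x, x = a ∨ x = b ∨ x ∈ P ∨ x ∈ Q
  aP : a ∉ P
  aQ : a ∉ Q
  bP : b ∉ P
  bQ : b ∉ Q
  disj : ∀ x, x ∈ P → x ∉ Q
  adj : ∀ x y, G.Adj x y ↔ ((x = a ∧ y = b) ∨ (x = b ∧ y = a) ∨ (x = a ∧ y ∈ P) ∨ (y = a ∧ x ∈ P)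
    ∨ (x = b ∧ y ∈ Q) ∨ (y = b ∧ x ∈ Q))
  hP : P.Nonempty
  hQ : Q.Nonempty

namespace IsDS

variable {V : Type*} [Fintype V] {G : SimpleGraph V} {a b : V} {P Q : Finset V}

lemma univ_eq (h : IsDS G a b P Q) : (Finset.univ : Finset V) = insert a (insert b (P ∪ Q)) := by
  ext x
  simpa using h.cover x

lemma sum_univ (h : IsDS G a b P Q) {M : Type*} [AddCommMonoid M] (f : V → M) :
    ∑ x, f x = f a + (f b + (∑ x ∈ P, f x + ∑ x ∈ Q, f x)) := by
  rw [h.univ_eq, Finset.sum_insert, Finset.sum_insert, Finset.sum_union]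
  · exact Finset.disjoint_left.mpr h.disj
  · simp [h.bP, h.bQ]
  · simp [h.aP, h.aQ, h.ab]

lemma nb_a (h : IsDS G a b P Q) : Finset.univ.filter (G.Adj a) = insert b P := by
  ext y
  have := h.ab; have := h.aP; have := h.aQ
  simp [h.adj]; grind

lemma nb_b (h : IsDS G a b P Q) : Finset.univ.filter (G.Adj b) = insert a Q := by
  ext y
  have := h.ab; have := h.bP; have := h.bQ
  simp [h.adj]; grind

lemma nb_P (h : IsDS G a b P Q) {x : V} (hx : x ∈ P) : Finset.univ.filter (G.Adj x) = {a} := by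
  ext y
  have := h.disj x hx
  have := h.aP; have := h.bP
  simp [h.adj]; grind

lemma nb_Q (h : IsDS G a b P Q) {x : V} (hx : x ∈ Q) : Finset.univ.filter (G.Adj x) = {b} := by
  ext y
  have := h.disj x
  have := h.aQ; have := h.bQ
  simp [h.adj]; grind

lemma deg (x : V) : G.degree x = (Finset.univ.filter (G.Adj x)).card := by
  rw [← SimpleGraph.card_neighborFinset_eq_degree, SimpleGraph.neighborFinset_eq_filter]

lemma energy (h : IsDS G a b P Q) (f : V → ℝ) :
    dirichletEnergy G f = (f a - f b) ^ 2 + ∑ x ∈ P, (f x - f a) ^ 2 + ∑ x ∈ Q, (f x - f b) ^ 2 := by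
  unfold dirichletEnergy
  simp_rw [← Finset.sum_filter]
  rw [h.sum_univ, h.nb_a, h.nb_b, Finset.sum_insert h.bP, Finset.sum_insert h.aQ]
  have e1 : ∀ x ∈ P, ∑ y ∈ Finset.univ.filter (G.Adj x), (f x - f y) ^ 2 = (f x - f a) ^ 2 := by
    intro x hx; rw [h.nb_P hx]; simp
  have e2 : ∀ x ∈ Q, ∑ y ∈ Finset.univ.filter (G.Adj x), (f x - f y) ^ 2 = (f x - f b) ^ 2 := by
    intro x hx; rw [h.nb_Q hx]; simp
  rw [Finset.sum_congr rfl e1, Finset.sum_congr rfl e2]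
  have e3 : ∑ x ∈ P, (f a - f x) ^ 2 = ∑ x ∈ P, (f x - f a) ^ 2 :=
    Finset.sum_congr rfl fun x _ => by ring
  have e4 : ∑ x ∈ Q, (f b - f x) ^ 2 = ∑ x ∈ Q, (f x - f b) ^ 2 :=
    Finset.sum_congr rfl fun x _ => by ring
  rw [e3, e4]; ring

lemma deg_a (h : IsDS G a b P Q) : G.degree a = P.card + 1 := by
  rw [deg, h.nb_a, Finset.card_insert_of_notMem h.bP]
lemma deg_b (h : IsDS G a b P Q) : G.degree b = Q.card + 1 := by
  rw [deg, h.nb_b, Finset.card_insert_of_notMem h.aQ]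
lemma deg_P (h : IsDS G a b P Q) {x : V} (hx : x ∈ P) : G.degree x = 1 := by
  rw [deg, h.nb_P hx]; simp
lemma deg_Q (h : IsDS G a b P Q) {x : V} (hx : x ∈ Q) : G.degree x = 1 := by
  rw [deg, h.nb_Q hx]; simp

lemma leaves (h : IsDS G a b P Q) : leavesFinset G = P ∪ Q := by
  ext x
  have hp := h.hP.card_pos
  have hq := h.hQ.card_pos
  simp only [leavesFinset, Finset.mem_filter, Finset.mem_univ, true_and, Finset.mem_union]
  constructor
  · intro hd
    rcases h.cover x with rfl | rfl | hx | hx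
    · have := h.deg_a; omega
    · have := h.deg_b; omega
    · exact Or.inl hx
    · exact Or.inr hx
  · rintro (hx | hx)
    · exact h.deg_P hx
    · exact h.deg_Q hx

lemma card (h : IsDS G a b P Q) : Fintype.card V = P.card + Q.card + 2 := by
  have := h.sum_univ (fun _ => 1)
  simp at this
  omega

/-- quadratic inequality -/
lemma ineq (p q A B X Y : ℝ) (hp : 0 < p) (hq : 0 < q) (h0 : p * X + q * Y = 0) :
    (p + q) / (p + q + p * q) * (p * X ^ 2 + q * Y ^ 2) ≤
      (A - B) ^ 2 + p * (X - A) ^ 2 + q * (Y - B) ^ 2 := by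
  have hY : Y = - (p * X) / q := by field_simp; linarith
  have hD : 0 < p + q + p * q := by positivity
  have key : (X - Y) ^ 2 * (p * q) ≤
      ((A - B) ^ 2 + p * (X - A) ^ 2 + q * (Y - B) ^ 2) * (p + q + p * q) := by
    have e : X - Y = (X - A) + (A - B) + (B - Y) := by ring
    rw [e]
    generalize X - A = u
    generalize A - B = v
    have : Y - B = - (B - Y) := by ring
    rw [this]
    generalize B - Y = w
    nlinarith [mul_pos hp hq, sq_nonneg (p * u - v), sq_nonneg (q * w - v), sq_nonneg (p * u - q * w),
      mul_nonneg hq.le (sq_nonneg (p * u - v)), mul_nonneg hp.le (sq_nonneg (q * w - v))]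
  have e2 : (p + q) * (p * X ^ 2 + q * Y ^ 2) = (X - Y) ^ 2 * (p * q) := by
    subst hY; field_simp; ring
  rw [div_mul_eq_mul_div, div_le_iff₀ hD, e2]
  exact key

lemma var (S : Finset V) (hS : S.Nonempty) (f : V → ℝ) (A : ℝ) :
    ∑ x ∈ S, (f x - A) ^ 2 = ∑ x ∈ S, (f x) ^ 2 - S.card * ((∑ x ∈ S, f x) / S.card) ^ 2
      + S.card * ((∑ x ∈ S, f x) / S.card - A) ^ 2 := by
  have hc : (S.card : ℝ) ≠ 0 := by exact_mod_cast hS.card_pos.ne'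
  have : ∑ x ∈ S, (f x - A) ^ 2 = ∑ x ∈ S, (f x) ^ 2 - 2 * A * ∑ x ∈ S, f x + S.card * A ^ 2 := by
    simp_rw [sub_sq]
    rw [Finset.sum_add_distrib, Finset.sum_sub_distrib, Finset.mul_sum]
    simp
    exact Finset.sum_congr rfl fun x _ => by ring
  rw [this]; field_simp; ring

lemma lower (h : IsDS G a b P Q) (f : V → ℝ) (h0 : ∑ x ∈ P, f x + ∑ x ∈ Q, f x = 0) :
    ((P.card : ℝ) + Q.card) / (P.card + Q.card + P.card * Q.card) *
      (∑ x ∈ P, f x ^ 2 + ∑ x ∈ Q, f x ^ 2) ≤ dirichletEnergy G f := by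
  have hp : (0:ℝ) < P.card := by exact_mod_cast h.hP.card_pos
  have hq : (0:ℝ) < Q.card := by exact_mod_cast h.hQ.card_pos
  rw [h.energy, var P h.hP, var Q h.hQ]
  have hvP := var P h.hP f ((∑ x ∈ P, f x) / P.card)
  have hvQ := var Q h.hQ f ((∑ x ∈ Q, f x) / Q.card)
  have nP : 0 ≤ ∑ x ∈ P, (f x - ((∑ x ∈ P, f x) / P.card)) ^ 2 :=
    Finset.sum_nonneg fun _ _ => sq_nonneg _
  have nQ : 0 ≤ ∑ x ∈ Q, (f x - ((∑ x ∈ Q, f x) / Q.card)) ^ 2 :=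
    Finset.sum_nonneg fun _ _ => sq_nonneg _
  rw [hvP] at nP
  rw [hvQ] at nQ
  have hk : (P.card : ℝ) * ((∑ x ∈ P, f x) / P.card) + Q.card * ((∑ x ∈ Q, f x) / Q.card) = 0 := by
    field_simp; exact h0
  have k := ineq _ _ (f a) (f b) _ _ hp hq hk
  generalize (∑ x ∈ P, f x) / P.card = X at *
  generalize (∑ x ∈ Q, f x) / Q.card = Y at *
  have hs : ((P.card : ℝ) + Q.card) / (P.card + Q.card + P.card * Q.card) ≤ 1 := by
    rw [div_le_one (by positivity)]; nlinarith [mul_pos hp hq]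
  generalize ((P.card : ℝ) + Q.card) / (P.card + Q.card + P.card * Q.card) = s at *
  nlinarith

lemma eig (h : IsDS G a b P Q) :
    steklovEig G (leavesFinset G) 2 =
      ((P.card : ℝ) + Q.card) / (P.card + Q.card + P.card * Q.card) := by
  have hp : (0:ℝ) < P.card := by exact_mod_cast h.hP.card_pos
  have hq : (0:ℝ) < Q.card := by exact_mod_cast h.hQ.card_pos
  have hsum : ∀ f : V → ℝ, ∑ x ∈ P ∪ Q, f x = ∑ x ∈ P, f x + ∑ x ∈ Q, f x := fun f =>
    Finset.sum_union (Finset.disjoint_left.mpr h.disj)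
  unfold steklovEig
  rw [h.leaves]
  apply IsLeast.csInf_eq
  constructor
  · -- test space
    set p : ℝ := (P.card : ℝ) with hpd
    set q : ℝ := (Q.card : ℝ) with hqd
    let D : ℝ := p + q + p * q
    have hD : 0 < D := by positivity
    -- values on P: D*q ; on Q: -D*p
    let g : V → ℝ := fun x => if x ∈ P then D * q else if x ∈ Q then - (D * p) else
      if x = a then D * q - (p + q) * q else - (D * p) + (p + q) * p
    have gP : ∀ x ∈ P, g x = D * q := fun x hx => by simp [g, hx]
    have gQ : ∀ x ∈ Q, g x = - (D * p) := fun x hx => by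
      have : x ∉ P := fun h' => h.disj x h' hx
      simp [g, hx, this]
    have ga : g a = D * q - (p + q) * q := by simp [g, h.aP, h.aQ]
    have gb : g b = - (D * p) + (p + q) * p := by simp [g, h.bP, h.bQ, h.ab.symm]
    refine ⟨Submodule.span ℝ (Set.range ![fun _ => 1, g]), ?_, ?_⟩
    · rw [Submodule.map_span, ← Set.range_comp]
      have hli : LinearIndependent ℝ
        ((LinearMap.funLeft ℝ ℝ (fun x : {v // v ∈ P ∪ Q} => (x : V))) ∘ ![fun _ => 1, g]) := by
        rw [Fintype.linearIndependent_iff]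
        intro c hc
        obtain ⟨u, hu⟩ := h.hP
        obtain ⟨v, hv⟩ := h.hQ
        have h1 := congrFun hc ⟨u, Finset.mem_union_left _ hu⟩
        have h2 := congrFun hc ⟨v, Finset.mem_union_right _ hv⟩
        simp [Fin.sum_univ_two, LinearMap.funLeft_apply, gP u hu, gQ v hv] at h1 h2
        have h3 : c 1 * (D * (p + q)) = 0 := by linear_combination h1 - h2
        have h4 : c 1 = 0 := by
          rcases mul_eq_zero.mp h3 with h | h
          · exact h
          · exfalso; have : 0 < D * (p + q) := mul_pos hD (add_pos hp hq)
            linarith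
        have h5 : c 0 = 0 := by rw [h4] at h1; linarith
        intro i; fin_cases i
        · exact h5
        · exact h4
      simpa using finrank_span_eq_card hli
    · intro f hf
      rw [Submodule.mem_span_range_iff_exists_fun] at hf
      obtain ⟨c, rfl⟩ := hf
      rw [h.energy, hsum]
      simp only [Fin.sum_univ_two, Matrix.cons_val_zero, Matrix.cons_val_one, Pi.add_apply,
        Pi.smul_apply, smul_eq_mul, mul_one, ga, gb]
      have s1 : ∑ x ∈ P, (c 0 + c 1 * g x - (c 0 + c 1 * (D * q - (p + q) * q))) ^ 2
          = p * (c 1 * (p + q) * q) ^ 2 := by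
        rw [Finset.sum_congr rfl fun x hx => by rw [gP x hx], Finset.sum_const, nsmul_eq_mul]
        ring
      have s2 : ∑ x ∈ Q, (c 0 + c 1 * g x - (c 0 + c 1 * (-(D * p) + (p + q) * p))) ^ 2
          = q * (c 1 * (p + q) * p) ^ 2 := by
        rw [Finset.sum_congr rfl fun x hx => by rw [gQ x hx], Finset.sum_const, nsmul_eq_mul]
        ring
      have s3 : ∑ x ∈ P, (c 0 + c 1 * g x) ^ 2 = p * (c 0 + c 1 * (D * q)) ^ 2 := by
        rw [Finset.sum_congr rfl fun x hx => by rw [gP x hx], Finset.sum_const, nsmul_eq_mul]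
      have s4 : ∑ x ∈ Q, (c 0 + c 1 * g x) ^ 2 = q * (c 0 - c 1 * (D * p)) ^ 2 := by
        rw [Finset.sum_congr rfl fun x hx => by rw [gQ x hx], Finset.sum_const, nsmul_eq_mul]
        ring
      rw [s1, s2, s3, s4]
      rw [show p + q + p * q = D from rfl, div_mul_eq_mul_div, le_div_iff₀ hD]
      have : (p + q) * (p * (c 0 + c 1 * (D * q)) ^ 2 + q * (c 0 - c 1 * (D * p)) ^ 2)
        = (p + q) ^ 2 * c 0 ^ 2 + (p + q) ^ 2 * (c 1 * D) ^ 2 * p * q := by ring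
      rw [this]
      have hDe : D = p + q + p * q := rfl
      have e : ((c 0 + c 1 * (D * q - (p + q) * q) - (c 0 + c 1 * (-(D * p) + (p + q) * p))) ^ 2 +
        p * (c 1 * (p + q) * q) ^ 2 + q * (c 1 * (p + q) * p) ^ 2) * D =
        (p + q) ^ 2 * (c 1 * D) ^ 2 * p * q := by rw [hDe]; ring
      rw [e]
      nlinarith [mul_nonneg (sq_nonneg (p + q)) (sq_nonneg (c 0))]
  · rintro t ⟨F, hF, ht⟩
    -- find f ∈ F with sum zero and nonzero on boundary
    let R := LinearMap.funLeft ℝ ℝ (fun x : {v // v ∈ P ∪ Q} => (x : V))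
    let L : (F.map R) →ₗ[ℝ] ℝ := (∑ i, LinearMap.proj i) ∘ₗ (F.map R).subtype
    have hL : ∃ w : F.map R, w ≠ 0 ∧ L w = 0 := by
      have : LinearMap.ker L ≠ ⊥ := LinearMap.ker_ne_bot_of_finrank_lt (by
        rw [hF]; simp)
      obtain ⟨w, hw, hw0⟩ := (Submodule.ne_bot_iff _).mp this
      exact ⟨w, hw0, hw⟩
    obtain ⟨⟨w, hw⟩, hw0, hLw⟩ := hL
    obtain ⟨f, hf, rfl⟩ := hw
    have hz : ∑ x ∈ P, f x + ∑ x ∈ Q, f x = 0 := by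
      rw [← hsum, ← Finset.sum_coe_sort]
      simpa [L, R, LinearMap.funLeft_apply] using hLw
    have hpos : 0 < ∑ x ∈ P ∪ Q, f x ^ 2 := by
      by_contra hcon
      apply hw0
      have hn : ∀ x ∈ P ∪ Q, 0 ≤ f x ^ 2 := fun _ _ => sq_nonneg _
      have h0 := le_antisymm (not_lt.mp hcon) (Finset.sum_nonneg hn)
      rw [Finset.sum_eq_zero_iff_of_nonneg hn] at h0
      ext x
      have := h0 x.1 x.2
      simpa [R, LinearMap.funLeft_apply] using this
    have h1 := h.lower f hz
    rw [← hsum] at h1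
    exact le_of_mul_le_mul_right (h1.trans (ht f hf)) hpos

end IsDS

section acyc
variable {V : Type*} {G : SimpleGraph V}

lemma path_len (hG : G.IsTree) {u v : V} (w : G.Walk u v) (hw : w.IsPath) : G.dist u v = w.length := by
  obtain ⟨p, hp, hl⟩ := hG.connected.exists_path_of_dist u v
  have := hG.isAcyclic.path_unique ⟨p, hp⟩ ⟨w, hw⟩
  rw [← hl]
  exact congrArg SimpleGraph.Walk.length (Subtype.ext_iff.mp this)

lemma dist2 (hG : G.IsTree) {x y z : V} (h1 : G.Adj x y) (h2 : G.Adj y z) (n : x ≠ z) :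
    G.dist x z = 2 := by
  have := path_len hG (.cons h1 (.cons h2 .nil)) (by
    have := h1.ne; have := h2.ne
    simp [SimpleGraph.Walk.cons_isPath_iff]; grind)
  simpa using this

lemma dist3 (hG : G.IsTree) {x y z w : V} (h1 : G.Adj x y) (h2 : G.Adj y z) (h3 : G.Adj z w)
    (n : x ≠ z) (n2 : x ≠ w) (n3 : y ≠ w) :
    G.dist x w = 3 := by
  have := path_len hG (.cons h1 (.cons h2 (.cons h3 .nil))) (by
    have := h1.ne; have := h2.ne; have := h3.ne
    simp [SimpleGraph.Walk.cons_isPath_iff]; grind)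
  simpa using this

lemma dist4 (hG : G.IsTree) {x y z w v : V} (h1 : G.Adj x y) (h2 : G.Adj y z) (h3 : G.Adj z w)
    (h4 : G.Adj w v) (hn : [x, y, z, w, v].Nodup) :
    G.dist x v = 4 := by
  have := path_len hG (.cons h1 (.cons h2 (.cons h3 (.cons h4 .nil)))) (by
    rw [SimpleGraph.Walk.isPath_def]; simpa using hn)
  simpa using this

end acyc

lemma IsDS.isTree {V : Type*} [Fintype V] {G : SimpleGraph V} {a b : V} {P Q : Finset V}
    (h : IsDS G a b P Q) : G.IsTree := by
  have hab : G.Adj a b := (h.adj _ _).mpr (by simp)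
  have hr : ∀ x, G.Reachable x a := by
    intro x
    rcases h.cover x with rfl | rfl | hx | hx
    · exact SimpleGraph.Reachable.refl _
    · exact hab.symm.reachable
    · exact SimpleGraph.Adj.reachable ((h.adj _ _).mpr (by simp [hx]))
    · exact (SimpleGraph.Adj.reachable ((h.adj x b).mpr (by simp [hx]))).trans hab.symm.reachable
  have hc : G.Connected := by
    haveI : Nonempty V := ⟨a⟩
    exact ⟨fun x y => (hr x).trans (hr y).symm⟩
  rw [SimpleGraph.isTree_iff_connected_and_card]
  refine ⟨hc, ?_⟩
  have hd := G.sum_degrees_eq_twice_card_edges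
  rw [h.sum_univ, h.deg_a, h.deg_b, Finset.sum_congr rfl fun x hx => h.deg_P hx,
    Finset.sum_congr rfl fun x hx => h.deg_Q hx] at hd
  rw [Nat.card_eq_fintype_card, Nat.card_eq_fintype_card, h.card, ← SimpleGraph.edgeFinset_card]
  simp at hd
  omega

lemma IsDS.diam {V : Type*} [Fintype V] {G : SimpleGraph V} {a b : V} {P Q : Finset V}
    (h : IsDS G a b P Q) : G.diam = 3 := by
  have hT := h.isTree
  haveI : Nonempty V := ⟨a⟩
  have hab : G.Adj a b := (h.adj _ _).mpr (by simp)
  apply le_antisymm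
  · obtain ⟨u, v, huv⟩ := G.exists_dist_eq_diam
    rw [← huv]
    have hx : ∀ x, ∃ c, (c = a ∨ c = b) ∧ G.dist x c ≤ 1 := by
      intro x
      rcases h.cover x with rfl | rfl | hx | hx
      · exact ⟨x, by simp⟩
      · exact ⟨x, by simp⟩
      · exact ⟨a, by simp, (SimpleGraph.dist_eq_one_iff_adj.mpr ((h.adj _ _).mpr (by simp [hx]))).le⟩
      · exact ⟨b, by simp, (SimpleGraph.dist_eq_one_iff_adj.mpr ((h.adj _ _).mpr (by simp [hx]))).le⟩
    obtain ⟨c, hc, hc1⟩ := hx u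
    obtain ⟨d, hd, hd1⟩ := hx v
    have hcd : G.dist c d ≤ 1 := by
      have h1 := SimpleGraph.dist_eq_one_iff_adj.mpr hab
      have h2 := SimpleGraph.dist_eq_one_iff_adj.mpr hab.symm
      rcases hc with rfl | rfl <;> rcases hd with rfl | rfl <;> simp [h1, h2]
    have t1 := hT.connected.dist_triangle (u := u) (v := c) (w := v)
    have t2 := hT.connected.dist_triangle (u := c) (v := d) (w := v)
    rw [SimpleGraph.dist_comm] at hd1
    omega
  · obtain ⟨u, hu⟩ := h.hP
    obtain ⟨v, hv⟩ := h.hQ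
    have hd : G.dist u v = 3 := by
      have := h.aQ; have := h.bP; have := h.disj u hu
      exact dist3 hT ((h.adj u a).mpr (by simp [hu])) hab ((h.adj b v).mpr (by simp [hv]))
        (by grind) (by grind) (by grind)
    rw [← hd]
    exact SimpleGraph.dist_le_diam (SimpleGraph.connected_iff_ediam_ne_top.mp hT.connected)

lemma exists_DS {V : Type*} [Fintype V] {G : SimpleGraph V} (hG : G.IsTree) (hd : G.diam = 3) :
    ∃ a b P Q, IsDS G a b P Q := by
  haveI := hG.connected.nonempty
  have hle : ∀ x y, G.dist x y ≤ 3 := fun x y => by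
    rw [← hd]
    exact SimpleGraph.dist_le_diam (SimpleGraph.connected_iff_ediam_ne_top.mp hG.connected)
  have tri : ∀ x y z, G.Adj x y → G.Adj y z → ¬ G.Adj x z := by
    intro x y z h1 h2 h3
    have := dist2 hG h1 h2 h3.ne
    rw [SimpleGraph.dist_eq_one_iff_adj.mpr h3] at this
    omega
  have quad : ∀ x y z w, G.Adj x y → G.Adj y z → G.Adj z w → x ≠ z → y ≠ w → ¬ G.Adj x w := by
    intro x y z w h1 h2 h3 n1 n2 h4
    have := dist3 hG h1 h2 h3 n1 h4.ne n2
    rw [SimpleGraph.dist_eq_one_iff_adj.mpr h4] at this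
    omega
  obtain ⟨u, v, huv⟩ := G.exists_dist_eq_diam
  rw [hd] at huv
  obtain ⟨p, hp, hl⟩ := hG.connected.exists_path_of_dist u v
  rw [huv] at hl
  obtain ⟨a, b, hua, hab, hbv⟩ : ∃ a b, G.Adj u a ∧ G.Adj a b ∧ G.Adj b v := by
    cases p with
    | nil => simp at hl
    | cons h1 p => cases p with
      | nil => simp at hl
      | cons h2 p => cases p with
        | nil => simp at hl
        | cons h3 p => cases p with
          | nil => exact ⟨_, _, h1, h2, h3⟩
          | cons h4 p => simp at hl
  have hnav : ¬ G.Adj a v := by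
    intro h
    have : G.dist u v ≤ 2 := SimpleGraph.dist_le (.cons hua (.cons h .nil))
    omega
  have hnub : ¬ G.Adj u b := by
    intro h
    have : G.dist u v ≤ 2 := SimpleGraph.dist_le (.cons h (.cons hbv .nil))
    omega
  have hub : u ≠ b := by rintro rfl; rw [SimpleGraph.dist_eq_one_iff_adj.mpr hbv] at huv; omega
  have hva : v ≠ a := by rintro rfl; rw [SimpleGraph.dist_eq_one_iff_adj.mpr hua] at huv; omega
  have cov : ∀ x, G.Adj a x ∨ G.Adj b x := by
    have step : ∀ x y, (G.Adj a x ∨ G.Adj b x) → G.Adj x y → (G.Adj a y ∨ G.Adj b y) := by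
      intro x w hx hxw
      by_contra hcon
      push Not at hcon
      obtain ⟨c1, c2⟩ := hcon
      rcases hx with hx | hx
      · have := dist4 hG hxw.symm hx.symm hab hbv (by
          have := hxw.ne; have := hx.ne; have := hab.ne; have := hbv.ne
          have := hab.symm; have := hbv.symm
          simp; grind)
        have := hle w v
        omega
      · have := dist4 hG hxw.symm hx.symm hab.symm hua.symm (by
          have := hxw.ne; have := hx.ne; have := hab.ne; have := hua.ne
          have := hab.symm; have := hua.symm; have := hxw.symm; have := hx.symm
          simp; grind [SimpleGraph.adj_comm])
        have := hle w u
        omega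
    intro x
    obtain ⟨w⟩ := hG.connected.preconnected b x
    have : ∀ {s t : V} (w : G.Walk s t), (G.Adj a s ∨ G.Adj b s) → (G.Adj a t ∨ G.Adj b t) := by
      intro s t w
      induction w with
      | nil => exact id
      | cons h p ih => exact fun hs => ih (step _ _ hs h)
    exact this w (Or.inl hab)
  refine ⟨a, b, Finset.univ.filter (fun x => G.Adj a x ∧ x ≠ b),
    Finset.univ.filter (fun x => G.Adj b x ∧ x ≠ a), ?_⟩
  refine ⟨hab.ne, ?_, by simp, by simp, by simp, by simp, ?_, ?_, ⟨u, by simp [hua.symm, hub]⟩,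
    ⟨v, by simp [hbv, hva]⟩⟩
  · intro x
    have := cov x
    simp; tauto
  · intro x hx hx'
    simp at hx hx'
    exact tri a b x hab hx'.1 hx.1
  · intro x y
    simp only [Finset.mem_filter, Finset.mem_univ, true_and]
    constructor
    · intro hxy
      by_cases xa : x = a
      · subst xa; by_cases yb : y = b <;> simp [yb, hxy]
      by_cases xb : x = b
      · subst xb; by_cases ya : y = a <;> simp [ya, hxy]
      by_cases ya : y = a
      · subst ya; simp [hxy.symm, xb]
      by_cases yb : y = b
      · subst yb; simp [hxy.symm, xa]
      exfalso
      rcases cov x with hx | hx <;> rcases cov y with hy | hy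
      · exact tri a x y hx hxy hy
      · exact quad a x y b hx hxy hy.symm (Ne.symm ya) xb hab
      · exact quad b x y a hx hxy hy.symm (Ne.symm yb) xa hab.symm
      · exact tri b x y hx hxy hy
    · rintro (⟨rfl, rfl⟩ | ⟨rfl, rfl⟩ | ⟨rfl, h⟩ | ⟨rfl, h⟩ | ⟨rfl, h⟩ | ⟨rfl, h⟩)
      · exact hab
      · exact hab.symm
      · exact h.1
      · exact h.1.symm
      · exact h.1
      · exact h.1.symm

lemma barbell_DS (q : ℕ) (hq : 1 ≤ q) :
    IsDS (barbell 1 q 3) (Sum.inr (Sum.inr (0 : Fin 2))) (Sum.inr (Sum.inr (1 : Fin 2)))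
      {Sum.inl 0} (Finset.univ.image fun i => Sum.inr (Sum.inl i)) := by
  refine ⟨by simp, ?_, by simp, by simp, by simp, by simp, by simp, ?_, by simp, ?_⟩
  · rintro (x | x | x)
    · right; right; left; simp; omega
    · simp
    · change Fin 2 at x
      fin_cases x <;> simp
  · rintro (x | x | x) (y | y | y) <;>
    first
    | (change Fin 2 at x; change Fin 2 at y; fin_cases x <;> fin_cases y <;> simp [barbell])
    | (change Fin 2 at x; fin_cases x <;> simp [barbell, Fin.eq_zero])
    | (change Fin 2 at y; fin_cases y <;> simp [barbell, Fin.eq_zero])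
    | simp [barbell, Fin.eq_zero]
  · exact ⟨Sum.inr (Sum.inl ⟨0, hq⟩), by simp⟩

lemma comap_DS {V W : Type*} [Fintype V] [Fintype W] (e : W ≃ V) {G : SimpleGraph V} {a b : V}
    {P Q : Finset V} (h : IsDS G a b P Q) :
    IsDS (G.comap e) (e.symm a) (e.symm b) (P.map e.symm.toEmbedding) (Q.map e.symm.toEmbedding) := by
  refine ⟨?_, ?_, ?_, ?_, ?_, ?_, ?_, ?_, ?_, ?_⟩
  · simpa using h.ab
  · intro x
    have := h.cover (e x)
    simpa [Equiv.eq_symm_apply, Finset.mem_map_equiv] using this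
  · simpa using h.aP
  · simpa using h.aQ
  · simpa using h.bP
  · simpa using h.bQ
  · intro x
    simpa [Finset.mem_map_equiv] using h.disj (e x)
  · intro x y
    simpa [Equiv.eq_symm_apply, Finset.mem_map_equiv] using h.adj (e x) (e y)
  · simpa using h.hP
  · simpa using h.hQ

/-- Let `n ≥ 4` be an integer. Then `σ̃_{2,max}(3,n) = (n-2)/(2n-5)`, and
this maximum is attained by the barbell graph `B(1, n-3, 3)`. -/
theorem stmt7 (n : ℕ) (hn : 4 ≤ n) :
    sigmaTildeMax 3 n = ((n : ℝ) - 2) / (2 * (n : ℝ) - 5) ∧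
    steklovEig (barbell 1 (n - 3) 3) (leavesFinset (barbell 1 (n - 3) 3)) 2 =
      ((n : ℝ) - 2) / (2 * (n : ℝ) - 5) := by
  have hB := barbell_DS (n - 3) (by omega)
  have hn' : (4 : ℝ) ≤ n := by exact_mod_cast hn
  have c2 : (Finset.univ.image fun i : Fin (n - 3) =>
      (Sum.inr (Sum.inl i) : Fin 1 ⊕ Fin (n - 3) ⊕ Fin (3 - 1))).card = n - 3 := by
    rw [Finset.card_image_of_injective _ (fun i j hij => by simpa using hij)]
    simp
  have cast3 : ((n - 3 : ℕ) : ℝ) = n - 3 := by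
    rw [Nat.cast_sub (by omega)]; norm_num
  refine ⟨?_, ?_⟩
  · unfold sigmaTildeMax
    apply IsGreatest.csSup_eq
    constructor
    · have hc : Fintype.card (Fin n) = Fintype.card (Fin 1 ⊕ Fin (n - 3) ⊕ Fin (3 - 1)) := by
        simp; omega
      have h := comap_DS (Fintype.equivOfCardEq hc) hB
      refine ⟨_, h.isTree, h.diam, ?_⟩
      rw [h.eig, Finset.card_map, Finset.card_map, c2, cast3]
      simp only [Finset.card_singleton, Nat.cast_one]
      congr 1 <;> ring
    · rintro s ⟨G, hG, hd, rfl⟩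
      obtain ⟨a, b, P, Q, h⟩ := exists_DS hG hd
      rw [h.eig]
      have hp : (1:ℝ) ≤ P.card := by exact_mod_cast h.hP.card_pos
      have hq : (1:ℝ) ≤ Q.card := by exact_mod_cast h.hQ.card_pos
      have hc := h.card
      rw [Fintype.card_fin] at hc
      have hc' : (n : ℝ) = P.card + Q.card + 2 := by exact_mod_cast hc
      rw [hc']
      have : (P.card : ℝ) + Q.card + 2 - 2 = P.card + Q.card := by ring
      rw [this]
      apply div_le_div_of_nonneg_left
      · positivity
      · linarith
      · nlinarith [mul_nonneg (sub_nonneg.mpr hp) (sub_nonneg.mpr hq)]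
  · rw [hB.eig, c2, cast3]
    simp only [Finset.card_singleton, Nat.cast_one]
    congr 1 <;> ring
end
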